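/- arXiv:1708.05343 — 2 statements merged into one kernel-verified Lean document; each statement's English description precedes it below -/
import Mathlib

section
/- Fix real numbers a, b, c. The cubic function V(m) = 1 + a·m + b·m² + c·m³ belongs to the class 𝒱∞ (i.e., m ↦ V(c'·m) belongs to 𝒱 for every real c') if and only if b³ ≥ 27c². -/
open MeasureTheory Filter

noncomputable section

/-- The Cauchy–Stieltjes kernel density `f(x,m) = V(m)/(V(m)+m(m-x))`. -/
def cskKernel (V : ℝ → ℝ) (m x : ℝ) : ℝ := V m / (V m + m * (m - x))

/-- `ν` is a non-degenerate, compactly supported probability measure on `ℝ` with mean `0`. -/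
def IsCSKGenerator (ν : Measure ℝ) : Prop :=
  IsProbabilityMeasure ν ∧
  (∃ R : ℝ, ν (Set.Icc (-R) R)ᶜ = 0) ∧
  (∀ a : ℝ, ν ≠ Measure.dirac a) ∧
  (∫ x, x ∂ν) = 0

/-- `V` is the variance function of the CSK family generated by `ν`:
`V` is real-analytic near `0`, `V 0 > 0`, and for all `m` near `0` the kernel
`f(x,m)` is a.e. nonnegative, integrates to `1`, and has mean `m`. -/
def IsCSKVarianceFun (ν : Measure ℝ) (V : ℝ → ℝ) : Prop :=
  AnalyticAt ℝ V 0 ∧ 0 < V 0 ∧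
  ∃ ε > 0, ∀ m : ℝ, |m| < ε →
    (∀ᵐ x ∂ν, 0 ≤ cskKernel V m x) ∧
    (∫ x, cskKernel V m x ∂ν) = 1 ∧
    (∫ x, x * cskKernel V m x ∂ν) = m

/-- The class `𝒱` of variance functions of CSK families generated by
non-degenerate compactly supported probability measures with mean `0` and variance `1`. -/
def memV (V : ℝ → ℝ) : Prop :=
  ∃ ν : Measure ℝ, IsCSKGenerator ν ∧ (∫ x, x ^ 2 ∂ν) = 1 ∧ IsCSKVarianceFun ν V

/-- The class `𝒱∞`: those `V` such that `m ↦ V (c * m)` is in `𝒱` for every real `c`. -/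
def memVinf (V : ℝ → ℝ) : Prop := ∀ c : ℝ, memV (fun m => V (c * m))


lemma cauchy_hasFPS (ρ : Measure ℝ) [IsFiniteMeasure ρ] (T x0 : ℝ) (hT : ρ (Set.Iio T) = 0)
    (hx : x0 < T) :
    HasFPowerSeriesAt (fun x => ∫ y, 1 / (y - x) ∂ρ)
      (FormalMultilinearSeries.ofScalars ℝ (fun n => ∫ y, 1 / (y - x0) ^ (n + 1) ∂ρ)) x0 := by
  rw [hasFPowerSeriesAt_iff]
  have hd : 0 < T - x0 := sub_pos.2 hx
  have hball : Metric.ball (0:ℝ) (T - x0) ∈ nhds (0:ℝ) := Metric.ball_mem_nhds _ hd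
  have hae : ∀ᵐ y ∂ρ, T ≤ y := by
    rw [ae_iff]; convert hT using 2; ext y; simp
  filter_upwards [hball] with z hz
  simp only [FormalMultilinearSeries.coeff_ofScalars, smul_eq_mul]
  have hz' : |z| < T - x0 := by simpa using hz
  have hsum : HasSum (fun n : ℕ => (|z| / (T - x0)) ^ n * (1 / (T - x0)))
      ((1 - |z| / (T - x0))⁻¹ * (1 / (T - x0))) :=
    (hasSum_geometric_of_lt_one (by positivity) ((div_lt_one hd).2 hz')).mul_right _
  have key := hasSum_integral_of_dominated_convergence (μ := ρ)
    (F := fun (n : ℕ) y => z ^ n * (1 / (y - x0) ^ (n + 1))) (f := fun y => 1 / (y - (x0 + z)))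
    (fun n _ => (|z| / (T - x0)) ^ n * (1 / (T - x0))) ?_ ?_ ?_ ?_ ?_
  · simpa only [integral_const_mul] using key
  · intro n
    exact Measurable.aestronglyMeasurable (by fun_prop)
  · intro n
    filter_upwards [hae] with y hy
    have h1 : 0 < y - x0 := by linarith
    rw [norm_mul, norm_pow, Real.norm_eq_abs, Real.norm_eq_abs,
      abs_of_pos (show 0 < 1 / (y - x0) ^ (n + 1) by positivity), div_pow, div_mul_div_comm, mul_one,
      mul_one_div, ← pow_succ]
    gcongr
  · exact Eventually.of_forall fun _ => hsum.summable
  · exact integrable_const _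
  · filter_upwards [hae] with y hy
    have h1 : 0 < y - x0 := by linarith
    have h2 : |z / (y - x0)| < 1 := by
      rw [abs_div, abs_of_pos h1, div_lt_one h1]; linarith
    have h3 : y - (x0 + z) ≠ 0 := by
      have := abs_lt.1 hz'; intro h; linarith [this.2]
    have := (hasSum_geometric_of_abs_lt_one h2).mul_right (1 / (y - x0))
    have ea : (fun n : ℕ => z ^ n * (1 / (y - x0) ^ (n + 1))) =
        fun n : ℕ => (z / (y - x0)) ^ n * (1 / (y - x0)) := by
      ext n; rw [div_pow, pow_succ]; field_simp
    have eb : 1 / (y - (x0 + z)) = (1 - z / (y - x0))⁻¹ * (1 / (y - x0)) := by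
      have h5 : y - x0 - z ≠ 0 := by convert h3 using 1; ring
      rw [show y - (x0 + z) = y - x0 - z by ring,
        show 1 - z / (y - x0) = (y - x0 - z) / (y - x0) by field_simp]
      field_simp
    show HasSum (fun n : ℕ => z ^ n * (1 / (y - x0) ^ (n + 1))) (1 / (y - (x0 + z)))
    rw [ea, eb]
    exact this

lemma pringsheim (ρ : Measure ℝ) [IsFiniteMeasure ρ] (R : ℝ) (hR : ρ (Set.Icc (-R) R)ᶜ = 0)
    (h : ℝ → ℝ) (hh : ∀ x, AnalyticAt ℝ h x) (N : ℝ)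
    (heq : ∀ x < N, ∫ y, 1 / (y - x) ∂ρ = h x) : ρ = 0 := by
  by_contra hne
  set S : Set ℝ := {t | ρ (Set.Iio t) = 0} with hS
  have hS1 : -R ∈ S := by
    refine measure_mono_null ?_ hR
    intro y hy hy'
    simp only [Set.mem_Iio] at hy
    linarith [hy'.1]
  have hS2 : ∀ t ∈ S, t ≤ R := by
    intro t ht
    by_contra hlt
    push Not at hlt
    apply hne
    rw [← Measure.measure_univ_eq_zero]
    refine measure_mono_null (t := Set.Iio t ∪ (Set.Icc (-R) R)ᶜ) ?_ (measure_union_null ht hR)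
    intro y _
    by_cases hy : y < t
    · left; exact hy
    · right; intro h; linarith [h.2]
  have hbdd : BddAbove S := ⟨R, hS2⟩
  set T := sSup S with hTdef
  have hT : ρ (Set.Iio T) = 0 := by
    have : Set.Iio T ⊆ ⋃ n : ℕ, Set.Iio (T - 1 / ((n:ℝ) + 1)) := by
      intro y hy
      obtain ⟨n, hn⟩ := exists_nat_one_div_lt (show (0:ℝ) < T - y from sub_pos.2 hy)
      simp only [Set.mem_iUnion, Set.mem_Iio]
      exact ⟨n, by linarith⟩
    refine measure_mono_null this (measure_iUnion_null fun n => ?_)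
    have hlt : T - 1 / ((n:ℝ) + 1) < T := by
      have : 0 < 1 / ((n:ℝ) + 1) := by positivity
      linarith
    obtain ⟨t, ht, htl⟩ := exists_lt_of_lt_csSup ⟨_, hS1⟩ hlt
    exact measure_mono_null (Set.Iio_subset_Iio htl.le) ht
  -- identity theorem
  have hEq : Set.EqOn (fun x => ∫ y, 1 / (y - x) ∂ρ) h (Set.Iio T) := by
    refine AnalyticOnNhd.eqOn_of_preconnected_of_eventuallyEq (𝕜 := ℝ) (z₀ := min N T - 1)
      (fun x hx => (cauchy_hasFPS ρ T x hT hx).analyticAt) (fun x _ => hh x)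
      isPreconnected_Iio ?_ ?_
    · have := min_le_right N T; simp only [Set.mem_Iio]; linarith
    · have h1 : Set.Iio N ∈ nhds (min N T - 1) := by
        apply Iio_mem_nhds; have := min_le_left N T; linarith
      filter_upwards [h1] with x hx using heq x hx
  obtain ⟨p, r, hp⟩ := hh T
  obtain ⟨δ, hδ0, hδr⟩ := ENNReal.lt_iff_exists_nnreal_btwn.1 hp.r_pos
  have hδ : 0 < (δ : ℝ) := by exact_mod_cast hδ0
  set x0 := T - (δ:ℝ) / 4 with hx0
  have hnn : ‖- (δ:ℝ) / 4‖ₑ = ((δ / 4 : NNReal) : ENNReal) := by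
    rw [enorm_eq_nnnorm]
    congr 1
    ext
    rw [coe_nnnorm, Real.norm_eq_abs, neg_div, abs_neg, abs_of_pos (by positivity)]
    simp
  have hball := hp.changeOrigin (y := - (δ:ℝ) / 4) (by
    refine lt_of_le_of_lt ?_ hδr
    rw [← enorm_eq_nnnorm, hnn, ENNReal.coe_le_coe, ← NNReal.coe_le_coe]
    push_cast
    linarith)
  have e0 : T + - (δ:ℝ) / 4 = x0 := by rw [hx0]; ring
  rw [e0] at hball
  have hx0T : x0 < T := by rw [hx0]; linarith
  have huniq := (cauchy_hasFPS ρ T x0 hT hx0T).eq_formalMultilinearSeries_of_eventually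
    hball.hasFPowerSeriesAt (by
      filter_upwards [Iio_mem_nhds hx0T] with x hx using hEq hx)
  have hrad : ((δ/2 : NNReal) : ENNReal) < (p.changeOrigin (- (δ:ℝ) / 4)).radius := by
    refine lt_of_lt_of_le ?_ hball.r_le
    refine lt_tsub_iff_right.2 (lt_of_le_of_lt ?_ hδr)
    rw [← enorm_eq_nnnorm, hnn, ← ENNReal.coe_add, ENNReal.coe_le_coe, ← NNReal.coe_le_coe]
    push_cast
    linarith
  obtain ⟨C, hC, hCn⟩ := (p.changeOrigin (- (δ:ℝ) / 4)).norm_mul_pow_le_of_lt_radius hrad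
  rw [← huniq] at hCn
  have hae : ∀ᵐ y ∂ρ, T ≤ y := by
    rw [ae_iff]; convert hT using 2; ext y; simp
  set E := Set.Ico T (T + (δ:ℝ) / 8)
  have hmain : ∀ n : ℕ, (4/3 : ℝ) ^ n * (ρ.real E * (8 / (3 * δ))) ≤ C := by
    intro n
    refine le_trans ?_ (hCn n)
    have hmE : MeasurableSet E := measurableSet_Ico
    rw [FormalMultilinearSeries.ofScalars_norm, Real.norm_eq_abs]
    have hint : Integrable (fun y => 1 / (y - x0) ^ (n + 1)) ρ := by
      refine Integrable.of_bound (C := 1 / (T - x0) ^ (n + 1))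
        (Measurable.aestronglyMeasurable (by fun_prop)) ?_
      filter_upwards [hae] with y hy
      have h1 : 0 < y - x0 := by linarith
      have h2 : 0 < T - x0 := by linarith
      rw [Real.norm_eq_abs, abs_of_pos (by positivity)]
      gcongr
    have hnn0 : 0 ≤ᵐ[ρ] (fun y => 1 / (y - x0) ^ (n + 1)) := by
      filter_upwards [hae] with y hy
      have h1 : 0 < y - x0 := by linarith
      simp only [Pi.zero_apply]
      positivity
    have h1 : ∫ y in E, (8 / (3 * (δ:ℝ))) ^ (n + 1) ∂ρ ≤ ∫ y in E, 1 / (y - x0) ^ (n + 1) ∂ρ := by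
      refine setIntegral_mono_on (integrable_const _) hint.integrableOn hmE ?_
      intro y hy
      have h1 : 0 < y - x0 := by linarith [hy.1]
      have h2 : y - x0 ≤ 3 * δ / 8 := by have := hy.2; rw [hx0]; linarith
      rw [show 8 / (3 * (δ:ℝ)) = 1 / (3 * δ / 8) by field_simp, div_pow, one_pow]
      gcongr
    have h2 : ∫ y in E, 1 / (y - x0) ^ (n + 1) ∂ρ ≤ ∫ y, 1 / (y - x0) ^ (n + 1) ∂ρ :=
      setIntegral_le_integral hint hnn0
    rw [setIntegral_const, smul_eq_mul] at h1
    have h3 := (h1.trans h2).trans (le_abs_self _)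
    refine le_trans (le_of_eq ?_) (mul_le_mul_of_nonneg_right h3 (by positivity))
    push_cast
    rw [pow_succ, show (4/3:ℝ) = 8 / (3 * (δ:ℝ)) * (δ / 2) by field_simp; norm_num, mul_pow]
    ring
  have hE0 : ρ.real E = 0 := by
    by_contra hpos
    have hpos' : 0 < ρ.real E * (8 / (3 * δ)) := by
      have : 0 < ρ.real E := lt_of_le_of_ne measureReal_nonneg (Ne.symm hpos)
      positivity
    obtain ⟨n, hn⟩ := pow_unbounded_of_one_lt (C / (ρ.real E * (8 / (3 * δ)))) (show (1:ℝ) < 4/3 by norm_num)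
    rw [div_lt_iff₀ hpos'] at hn
    linarith [hmain n]
  have hE0' : ρ E = 0 := by
    rwa [measureReal_eq_zero_iff] at hE0
  have : T + (δ:ℝ)/8 ∈ S := by
    refine measure_mono_null (t := Set.Iio T ∪ E) ?_ (measure_union_null hT hE0')
    intro y hy
    by_cases hy' : y < T
    · left; exact hy'
    · right; exact ⟨not_lt.1 hy', hy⟩
  have := le_csSup hbdd this
  linarith

lemma D_neg (B γ m n : ℝ) (hγ : 0 ≤ γ) (hB : B ^ 3 < 27 * γ ^ 2) (hm : m < 0) (hn : n < 0) :
    -1 / (m * n) + B + γ * (m + n) < 0 := by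
  have hmn : 0 < m * n := mul_pos_of_neg_of_neg hm hn
  suffices h : B * (m * n) + γ * (m + n) * (m * n) < 1 by
    have : -1 / (m * n) + B + γ * (m + n)
        = (B * (m * n) + γ * (m + n) * (m * n) - 1) / (m * n) := by
      have h1 := hm.ne
      have h2 := hn.ne
      field_simp
      ring
    rw [this]
    exact div_neg_of_neg_of_pos (by linarith) hmn
  by_cases hB0 : B ≤ 0
  · have h1 : B * (m * n) ≤ 0 := mul_nonpos_of_nonpos_of_nonneg hB0 hmn.le
    have h2 : γ * (m + n) * (m * n) ≤ 0 :=
      mul_nonpos_of_nonpos_of_nonneg (mul_nonpos_of_nonneg_of_nonpos hγ (by linarith)) hmn.le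
    linarith
  push Not at hB0
  have hγ0 : 0 < γ := by
    rcases hγ.lt_or_eq with h | h
    · exact h
    · rw [← h] at hB
      have : 0 < B ^ 3 := by positivity
      norm_num at hB
      linarith
  set v := Real.sqrt (m * n) with hv
  have hv0 : 0 < v := Real.sqrt_pos.2 hmn
  have hv2 : v ^ 2 = m * n := Real.sq_sqrt hmn.le
  have hs : m + n ≤ -(2 * v) := by
    have : 2 * v ≤ -(m + n) := by
      apply abs_le_of_sq_le_sq' _ (by linarith) |>.2
      nlinarith [sq_nonneg (m - n)]
    linarith
  have h1 : γ * (m + n) * (m * n) ≤ γ * (-(2 * v)) * (m * n) := by gcongr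
  refine lt_of_le_of_lt (add_le_add_right h1 _) ?_
  rw [← hv2]
  have h2 : 27 * γ ^ 2 * (B * v ^ 2 + γ * (-(2 * v)) * v ^ 2) ≤ B ^ 3 := by
    have : 0 ≤ (3 * (γ * v) - B) ^ 2 * (6 * (γ * v) + B) := by positivity
    nlinarith
  have h3 : 0 < 27 * γ ^ 2 := by positivity
  by_contra hcon
  push Not at hcon
  nlinarith

lemma L_sub (α B γ m n : ℝ) (hm : m < 0) (hn : n < 0) :
    (1 / m + α + B * m + γ * m ^ 2) - (1 / n + α + B * n + γ * n ^ 2)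
      = (m - n) * (-1 / (m * n) + B + γ * (m + n)) := by
  have h1 := hm.ne
  have h2 := hn.ne
  field_simp
  ring

lemma L_surj (α B γ : ℝ) (hγ : 0 ≤ γ) (hB : B ^ 3 < 27 * γ ^ 2) (x : ℝ) :
    ∃ m < 0, 1 / m + α + B * m + γ * m ^ 2 = x := by
  have hcont : ContinuousOn (fun m : ℝ => 1 / m + α + B * m + γ * m ^ 2) (Set.Iio 0) := by
    have : ∀ m ∈ Set.Iio (0:ℝ), m ≠ 0 := fun m hm => (ne_of_lt hm)
    fun_prop (disch := assumption)
  have hlow : ∃ m < 0, 1 / m + α + B * m + γ * m ^ 2 ≤ x := by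
    set k := 1 + |α| + |B| + γ + |x| with hk
    have hk1 : 1 ≤ k := by
      have := abs_nonneg α; have := abs_nonneg B; have := abs_nonneg x; linarith
    have hk0 : 0 < k := by linarith
    refine ⟨-(1 / k), by simp [hk0], ?_⟩
    have e1 : 1 / (-(1 / k)) = -k := by field_simp
    rw [e1]
    have hle : 1 / k ≤ 1 := by rw [div_le_one hk0]; exact hk1
    have hpos : 0 < 1 / k := by positivity
    have h1 : B * -(1 / k) ≤ |B| := by
      have : -B ≤ |B| := neg_le_abs B
      nlinarith [abs_nonneg B]
    have h2 : γ * (-(1 / k)) ^ 2 ≤ γ := by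
      have : (-(1 / k)) ^ 2 ≤ 1 := by nlinarith
      nlinarith
    have := le_abs_self α
    have := neg_abs_le x
    linarith
  have hhigh : ∃ m < 0, x ≤ 1 / m + α + B * m + γ * m ^ 2 := by
    have key : ∃ r : ℝ, 1 ≤ r ∧ x + 1 + |α| ≤ r * (γ * r - B) := by
      rcases hγ.lt_or_eq with h | h
      · refine ⟨1 + (|B| + |α| + |x| + 1) / γ, ?_, ?_⟩
        · have : 0 ≤ (|B| + |α| + |x| + 1) / γ := by positivity
          linarith
        · have e : γ * (1 + (|B| + |α| + |x| + 1) / γ) = γ + (|B| + |α| + |x| + 1) := by field_simp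
          rw [e]
          have h0 : 0 ≤ (|B| + |α| + |x| + 1) / γ := by positivity
          have := le_abs_self B
          have := le_abs_self x
          have := abs_nonneg x
          have := abs_nonneg α
          nlinarith
      · have hB0 : B < 0 := by
          rw [← h] at hB
          by_contra hc
          push Not at hc
          have : 0 ≤ B ^ 3 := by positivity
          norm_num at hB
          linarith
        refine ⟨1 + (|α| + |x| + 1) / (-B), ?_, ?_⟩
        · have : 0 ≤ (|α| + |x| + 1) / (-B) := div_nonneg (by positivity) (by linarith)
          linarith
        · rw [← h]
          have e : (1 + (|α| + |x| + 1) / (-B)) * (0 * (1 + (|α| + |x| + 1) / (-B)) - B)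
            = -B + (|α| + |x| + 1) := by
              have := hB0.ne
              field_simp
              ring
          rw [e]
          have := le_abs_self x
          linarith
    obtain ⟨r, hr, hr2⟩ := key
    refine ⟨-r, by linarith, ?_⟩
    have e1 : -1 ≤ 1 / (-r) := by
      rw [one_div, inv_neg, neg_le_neg_iff]
      exact inv_le_one_of_one_le₀ hr
    have := neg_abs_le α
    nlinarith
  obtain ⟨p, hp, hp'⟩ := hlow
  obtain ⟨q, hq, hq'⟩ := hhigh
  obtain ⟨m, hm, hm'⟩ := isPreconnected_Iio.intermediate_value hp hq hcont ⟨hp', hq'⟩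
  exact ⟨m, hm, hm'⟩

lemma necessity (α β γ : ℝ) (hγ : 0 ≤ γ) (hB : (β + 1) ^ 3 < 27 * γ ^ 2)
    (hV : memV (fun m => 1 + α * m + β * m ^ 2 + γ * m ^ 3)) : False := by
  obtain ⟨ν, ⟨hprob, ⟨R, hR⟩, -, hmean⟩, hvar, -, -, ε, hε, hker⟩ := hV
  have hβ : β ^ 3 < 27 * γ ^ 2 := by
    have : β ^ 3 < (β + 1) ^ 3 := (Odd.strictMono_pow (by decide)) (by linarith)
    linarith
  set L : ℝ → ℝ := fun m => 1 / m + α + (β + 1) * m + γ * m ^ 2 with hL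
  choose g hg0 hgL using L_surj α (β + 1) γ hγ hB
  have hLanti : ∀ m n : ℝ, m < 0 → n < 0 → m ≤ n → L n ≤ L m := by
    intro m n hm hn hmn
    have h1 := L_sub α (β + 1) γ m n hm hn
    have h2 := D_neg (β + 1) γ m n hγ hB hm hn
    have : 0 ≤ (m - n) * (-1 / (m * n) + (β + 1) + γ * (m + n)) :=
      mul_nonneg_of_nonpos_of_nonpos (by linarith) h2.le
    simp only [hL]
    linarith
  have hgl : ∀ m < 0, g (L m) = m := by
    intro m hm
    have h1 := L_sub α (β + 1) γ (g (L m)) m (hg0 _) hm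
    have h2 := D_neg (β + 1) γ (g (L m)) m hγ hB (hg0 _) hm
    rw [hgL] at h1
    simp only [hL, sub_self] at h1
    rcases mul_eq_zero.1 h1.symm with h | h
    · linarith
    · exact absurd h h2.ne
  have hgan : ∀ x, AnalyticAt ℝ g x := by
    intro x
    have hm := hg0 x
    have hLan : AnalyticAt ℝ L (g x) := by
      have := hm.ne
      simp only [hL]
      fun_prop (disch := assumption)
    have hder : HasDerivAt L (-1 / (g x * g x) + (β + 1) + γ * (g x + g x)) (g x) := by
      have h1 : HasDerivAt (fun m : ℝ => m⁻¹ + α + (β + 1) * m + γ * m ^ 2)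
          (-((g x) ^ 2)⁻¹ + (β + 1) * 1 + γ * ((2:ℕ) * (g x) ^ (2 - 1))) (g x) :=
        (((hasDerivAt_inv hm.ne).add_const α).add ((hasDerivAt_id _).const_mul _)).add
          ((hasDerivAt_pow 2 _).const_mul _)
      have e : L = fun m : ℝ => m⁻¹ + α + (β + 1) * m + γ * m ^ 2 := by
        ext m; simp [hL]
      rw [e]
      convert h1 using 1
      have := hm.ne
      field_simp
      norm_num
      ring
    have hd : deriv L (g x) ≠ 0 := by
      rw [hder.deriv]
      exact (D_neg (β + 1) γ (g x) (g x) hγ hB hm hm).ne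
    have := (analyticAt_comp_iff_of_deriv_ne_zero (g := g) hLan hd).1 (by
      refine analyticAt_id.congr ?_
      filter_upwards [Iio_mem_nhds hm] with m hm'
      simp [hgl m hm'])
    have e : L (g x) = x := hgL x
    rwa [e] at this
  obtain ⟨t, ht0, ht⟩ := L_surj α β γ hγ hβ 0
  have htL : L t = t := by simp only [hL]; linarith
  -- the weighted measure
  have hae : ∀ᵐ y ∂ν, y ∈ Set.Icc (-R) R := by
    rw [ae_iff]; exact hR
  have hintid : Integrable (fun y : ℝ => y) ν := by
    refine Integrable.of_bound (C := R) (by fun_prop) ?_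
    filter_upwards [hae] with y hy
    exact abs_le.2 ⟨hy.1, hy.2⟩
  have hintsq : Integrable (fun y : ℝ => (y - t) ^ 2) ν := by
    refine Integrable.of_bound (C := (R + |t|) ^ 2) (Measurable.aestronglyMeasurable (by fun_prop)) ?_
    filter_upwards [hae] with y hy
    rw [norm_pow, Real.norm_eq_abs]
    gcongr
    exact (abs_sub _ _).trans (by gcongr; exact abs_le.2 ⟨hy.1, hy.2⟩)
  set ρ : Measure ℝ := ν.withDensity (fun y => ENNReal.ofReal ((y - t) ^ 2)) with hρ
  have hfin : IsFiniteMeasure ρ := isFiniteMeasure_withDensity_ofReal hintsq.2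
  have hρint : ∀ f : ℝ → ℝ, ∫ y, f y ∂ρ = ∫ y, (y - t) ^ 2 * f y ∂ν := by
    intro f
    rw [hρ, integral_withDensity_eq_integral_toReal_smul (by fun_prop) (by simp)]
    congr 1
    ext y
    rw [ENNReal.toReal_ofReal (sq_nonneg _), smul_eq_mul]
  have hρ0 : ρ = 0 := by
    refine pringsheim ρ R (withDensity_absolutelyContinuous _ _ hR)
      (fun x => (x - 2 * t) - (g x - t) * (-1 / (g x * t) + (β + 1) + γ * (g x + t)) ^ 2
        / (-1 / (g x * t) + β + γ * (g x + t))) ?_ (min (L (-(ε / 2))) (-R - 1)) ?_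
    · intro x
      have h1 := hgan x
      have h2 : g x * t ≠ 0 := mul_ne_zero (hg0 x).ne ht0.ne
      have h3 := (D_neg β γ (g x) t hγ hβ (hg0 x) ht0).ne
      fun_prop (disch := assumption)
    · intro x hx
      have hx1 : x < L (-(ε / 2)) := lt_of_lt_of_le hx (min_le_left _ _)
      have hx2 : x < -R - 1 := lt_of_lt_of_le hx (min_le_right _ _)
      have hm := hg0 x
      have hmL : 1 / g x + α + (β + 1) * g x + γ * g x ^ 2 = x := hgL x
      set m := g x with hmdef
      have hmε : -(ε / 2) < m := by
        by_contra hc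
        push Not at hc
        have := hLanti m (-(ε / 2)) hm (by linarith) hc
        have e : L m = x := hmL
        linarith
      obtain ⟨-, hk, -⟩ := hker m (by rw [abs_of_neg hm]; linarith)
      have hVm : 1 + α * m + β * m ^ 2 + γ * m ^ 3 = m * (x - m) := by
        rw [← hmL]
        have := hm.ne
        field_simp
        ring
      have hphi : (m - x) * ∫ y, 1 / (y - x) ∂ν = 1 := by
        refine Eq.trans ?_ hk
        rw [← integral_const_mul]
        congr 1
        ext y
        simp only [cskKernel]
        rw [hVm, show m * (x - m) + m * (m - y) = m * (x - y) by ring,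
          mul_div_mul_left _ _ hm.ne, mul_one_div, ← neg_sub x m, ← neg_sub x y, neg_div_neg_eq]
      have hdec : ∫ y, 1 / (y - x) ∂ρ = (x - 2 * t) + (x - t) ^ 2 * ∫ y, 1 / (y - x) ∂ν := by
        rw [hρint]
        have hI : Integrable (fun y => 1 / (y - x)) ν := by
          refine Integrable.of_bound (C := 1) (Measurable.aestronglyMeasurable (by fun_prop)) ?_
          filter_upwards [hae] with y hy
          have h1 : 1 ≤ y - x := by linarith [hy.1]
          rw [Real.norm_eq_abs, abs_of_pos (by positivity)]
          exact (div_le_one (by linarith)).2 h1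
        have : ∫ y, (y - t) ^ 2 * (1 / (y - x)) ∂ν
            = ∫ y, (y + (x - 2 * t)) + (x - t) ^ 2 * (1 / (y - x)) ∂ν := by
          refine integral_congr_ae ?_
          filter_upwards [hae] with y hy
          have h1 : y - x ≠ 0 := by have := hy.1; intro h; linarith
          field_simp
          ring
        rw [this, integral_add (f := fun y : ℝ => y + (x - 2 * t)) (hintid.add (integrable_const _)) (hI.const_mul _),
          integral_add hintid (integrable_const _), hmean, integral_const_mul]
        simp
      rw [hdec]
      have hDβ := (D_neg β γ m t hγ hβ hm ht0).ne
      have e1 : x - t = (m - t) * (-1 / (m * t) + (β + 1) + γ * (m + t)) := by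
        rw [← L_sub α (β + 1) γ m t hm ht0, hmL]
        have : 1 / t + α + (β + 1) * t + γ * t ^ 2 = t := htL
        rw [this]
      have e2 : m - x = -((m - t) * (-1 / (m * t) + β + γ * (m + t))) := by
        rw [← L_sub α β γ m t hm ht0, ht, ← hmL]
        ring
      have hmx : m - x ≠ 0 := left_ne_zero_of_mul_eq_one hphi
      have hmt : m - t ≠ 0 := by
        intro h; rw [h] at e2; simp at e2; exact hmx e2
      have e3 : ∫ y, 1 / (y - x) ∂ν = 1 / (m - x) := by
        rw [eq_div_iff hmx, mul_comm]; exact hphi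
      rw [e3, e2, e1]
      generalize -1 / (m * t) + β + γ * (m + t) = p at *
      generalize -1 / (m * t) + (β + 1) + γ * (m + t) = q at *
      field_simp
      ring
  have hyt : ∀ᵐ y ∂ν, y = t := by
    have h1 := withDensity_eq_zero_iff (μ := ν) (f := fun y => ENNReal.ofReal ((y - t) ^ 2))
      (by fun_prop) |>.1 hρ0
    filter_upwards [h1] with y hy
    simp at hy
    nlinarith [sq_nonneg (y - t)]
  have h1 : t = 0 := by
    rw [← hmean, integral_congr_ae (g := fun _ => t) hyt]; simp
  have h2 : ∫ y, y ^ 2 ∂ν = 0 := by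
    rw [integral_congr_ae (g := fun _ => 0)]
    · simp
    · filter_upwards [hyt] with y hy
      simp [hy, h1]
  linarith

open scoped InnerProductSpace CompactlySupported in
lemma spectral_measure {H : Type*} [NormedAddCommGroup H] [InnerProductSpace ℂ H]
    [CompleteSpace H] (T : H →L[ℂ] H) (hT : IsSelfAdjoint T) (e : H) :
    ∃ (ν : Measure ℝ) (R : ℝ), IsFiniteMeasure ν ∧ ν (Set.Icc (-R) R)ᶜ = 0 ∧
      spectrum ℝ T ⊆ Set.Icc (-R) R ∧
      ∀ f : ℝ → ℝ, ContinuousOn f (spectrum ℝ T) → Measurable f →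
        ∫ x, f x ∂ν = (⟪e, cfc f T e⟫_ℂ).re := by
  have hcpt : IsCompact (spectrum ℝ T) := spectrum.isCompact T
  have : CompactSpace (spectrum ℝ T) := isCompact_iff_compactSpace.1 hcpt
  obtain ⟨R, hR⟩ : ∃ R : ℝ, spectrum ℝ T ⊆ Set.Icc (-R) R := by
    obtain ⟨R, hR⟩ := hcpt.isBounded.subset_closedBall 0
    refine ⟨R, fun x hx => ?_⟩
    have := hR hx
    rw [Real.closedBall_eq_Icc] at this
    simpa using this
  let Λ0 : C_c(spectrum ℝ T, ℝ) →ₗ[ℝ] ℝ :=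
    { toFun := fun f => (⟪e, cfcHom hT (f : C(spectrum ℝ T, ℝ)) e⟫_ℂ).re
      map_add' := by
        intro f g
        have : ((f + g : C_c(spectrum ℝ T, ℝ)) : C(spectrum ℝ T, ℝ)) = (f : C(spectrum ℝ T, ℝ)) + g := rfl
        simp [this, inner_add_right]
      map_smul' := by
        intro c f
        have : ((c • f : C_c(spectrum ℝ T, ℝ)) : C(spectrum ℝ T, ℝ)) = c • (f : C(spectrum ℝ T, ℝ)) := rfl
        simp [this, inner_smul_right_eq_smul] }
  let Λ : C_c(spectrum ℝ T, ℝ) →ₚ[ℝ] ℝ := PositiveLinearMap.mk₀ Λ0 (by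
    intro f hf
    have h1 : 0 ≤ cfcHom hT (f : C(spectrum ℝ T, ℝ)) := by
      rw [cfcHom_nonneg_iff]
      exact fun x => hf x
    have h2 := (ContinuousLinearMap.nonneg_iff_isPositive _).1 h1
    exact h2.re_inner_nonneg_right e)
  refine ⟨(RealRMK.rieszMeasure Λ).map Subtype.val, R, ?_, ?_, hR, ?_⟩
  · infer_instance
  · rw [Measure.map_apply measurable_subtype_coe measurableSet_Icc.compl]
    convert measure_empty (μ := RealRMK.rieszMeasure Λ)
    ext x
    simp only [Set.mem_preimage, Set.mem_compl_iff, Set.mem_empty_iff_false, iff_false, not_not]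
    exact hR x.2
  · intro f hf hfm
    rw [integral_map (by fun_prop) hfm.aestronglyMeasurable]
    let F : C_c(spectrum ℝ T, ℝ) := CompactlySupportedContinuousMap.continuousMapEquiv
      ⟨_, hf.domRestrict⟩
    have h1 := RealRMK.integral_rieszMeasure Λ F
    rw [cfc_apply f T hT hf]
    exact h1

open scoped InnerProductSpace in
lemma spectral_measure' {H : Type*} [NormedAddCommGroup H] [InnerProductSpace ℂ H]
    [CompleteSpace H] (T : H →L[ℂ] H) (hT : IsSelfAdjoint T) (e : H) (he : ⟪e, e⟫_ℂ = 1) :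
    ∃ (ν : Measure ℝ) (R : ℝ), IsProbabilityMeasure ν ∧ ν (Set.Icc (-R) R)ᶜ = 0 ∧
      (∫ x, x ∂ν) = (⟪e, T e⟫_ℂ).re ∧ (∫ x, x ^ 2 ∂ν) = (⟪e, T (T e)⟫_ℂ).re ∧
      ∀ z : ℝ, R < |z| → ∃ y : H, (z : ℂ) • y - T y = e ∧
        ∫ x, 1 / (z - x) ∂ν = (⟪e, y⟫_ℂ).re := by
  obtain ⟨ν, R, hfin, hR, hsp, hν⟩ := spectral_measure T hT e
  refine ⟨ν, R, ?_, hR, ?_, ?_, ?_⟩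
  · have := hν (fun _ => 1) (by fun_prop) (by fun_prop)
    rw [cfc_const_one ℝ T] at this
    simp only [integral_const, smul_eq_mul, mul_one, ContinuousLinearMap.one_apply, he,
      Complex.one_re] at this
    constructor
    rw [measureReal_def] at this
    rw [← ENNReal.ofReal_toReal (measure_ne_top ν Set.univ), this, ENNReal.ofReal_one]
  · have := hν (fun x => x) (by fun_prop) (by fun_prop)
    rw [cfc_id' ℝ T] at this
    exact this
  · have := hν (fun x => x ^ 2) (by fun_prop) (by fun_prop)
    rw [cfc_pow_id (R := ℝ) T 2] at this
    rw [this, pow_two, ContinuousLinearMap.mul_apply]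
  · intro z hz
    have hne : ∀ x ∈ spectrum ℝ T, z - x ≠ 0 := by
      intro x hx h
      have : z = x := by linarith
      rw [this] at hz
      exact absurd (abs_le.2 ⟨(hsp hx).1, (hsp hx).2⟩) (not_le.2 hz)
    have hcont : ContinuousOn (fun x : ℝ => 1 / (z - x)) (spectrum ℝ T) := by
      fun_prop (disch := assumption)
    have hI := hν (fun x => 1 / (z - x)) hcont (by fun_prop)
    refine ⟨cfc (fun x : ℝ => 1 / (z - x)) T e, ?_, hI⟩
    have hmul : (algebraMap ℝ _ z - T) * cfc (fun x : ℝ => 1 / (z - x)) T = 1 := by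
      have h1 : cfc (fun x : ℝ => z - x) T = algebraMap ℝ _ z - T := by
        rw [cfc_sub (fun _ : ℝ => z) (fun x : ℝ => x) T (by fun_prop) (by fun_prop), cfc_const z T,
          cfc_id' ℝ T]
      rw [← h1, ← cfc_mul (fun x : ℝ => z - x) (fun x => 1 / (z - x)) T (by fun_prop) hcont,
        ← cfc_const_one ℝ T]
      apply cfc_congr
      intro x hx
      have := hne x hx
      simp only []
      field_simp
    have := congrArg (fun A => A e) hmul
    simpa [Algebra.algebraMap_eq_smul_one] using this

open scoped InnerProductSpace in
lemma stripping (μ : Measure ℝ) [IsProbabilityMeasure μ] (R : ℝ) (hR : μ (Set.Icc (-R) R)ᶜ = 0) :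
    ∃ (ν : Measure ℝ) (R' : ℝ), IsProbabilityMeasure ν ∧ ν (Set.Icc (-R') R')ᶜ = 0 ∧
      (∫ x, x ∂ν) = 0 ∧ (∫ x, x ^ 2 ∂ν) = 1 ∧
      ∀ z : ℝ, R' < |z| → (z - ∫ x, 1 / (z - x) ∂μ) * ∫ x, 1 / (z - x) ∂ν = 1 := by
  have hae : ∀ᵐ y ∂μ, y ∈ Set.Icc (-R) R := by
    rw [ae_iff]; exact hR
  have hmem : ∀ f : Lp ℂ 2 μ, MemLp (fun x : ℝ => (x:ℂ) * f x) 2 μ := by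
    intro f
    refine MemLp.of_le_mul (c := R) (Lp.memLp f) ?_ ?_
    · exact (Measurable.aestronglyMeasurable (by fun_prop)).mul (Lp.aestronglyMeasurable f)
    · filter_upwards [hae] with x hx
      rw [norm_mul, Complex.norm_real, Real.norm_eq_abs]
      gcongr
      exact abs_le.2 ⟨hx.1, hx.2⟩
  let M : Lp ℂ 2 μ →ₗ[ℂ] Lp ℂ 2 μ :=
    { toFun := fun f => (hmem f).toLp _
      map_add' := by
        intro f g
        rw [← MemLp.toLp_add]
        apply MemLp.toLp_congr
        filter_upwards [Lp.coeFn_add f g] with x hx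
        rw [hx, Pi.add_apply, Pi.add_apply, mul_add]
      map_smul' := by
        intro c f
        rw [RingHom.id_apply, ← MemLp.toLp_const_smul]
        apply MemLp.toLp_congr
        filter_upwards [Lp.coeFn_smul c f] with x hx
        simp only [hx, Pi.smul_apply, smul_eq_mul]
        ring }
  have hM : ∀ f : Lp ℂ 2 μ, (M f : ℝ → ℂ) =ᵐ[μ] fun x => (x:ℂ) * f x := fun f =>
    MemLp.coeFn_toLp (hmem f)
  let ξ : Lp ℂ 2 μ := (memLp_const (1:ℂ)).toLp _
  have hξ : (ξ : ℝ → ℂ) =ᵐ[μ] fun _ => 1 := MemLp.coeFn_toLp _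
  have hξh : ∀ h : Lp ℂ 2 μ, ⟪ξ, h⟫_ℂ = ∫ x, h x ∂μ := by
    intro h
    rw [L2.inner_def]
    refine integral_congr_ae ?_
    filter_upwards [hξ] with x hx
    simp [hx]
  have hξξ : ⟪ξ, ξ⟫_ℂ = 1 := by
    rw [hξh, integral_congr_ae hξ]; simp
  let T0 : WithLp 2 (ℂ × Lp ℂ 2 μ) →ₗ[ℂ] WithLp 2 (ℂ × Lp ℂ 2 μ) :=
    { toFun := fun p => WithLp.toLp 2 (⟪ξ, p.snd⟫_ℂ, p.fst • ξ + M p.snd)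
      map_add' := by
        intro p q
        apply WithLp.ofLp_injective
        refine Prod.ext ?_ ?_
        · simp [inner_add_right]
        · simp [add_smul]; abel
      map_smul' := by
        intro c p
        apply WithLp.ofLp_injective
        refine Prod.ext ?_ ?_
        · simp [inner_smul_right]
        · simp [mul_smul] }
  have hsym : T0.IsSymmetric := by
    intro p q
    have hMs : ⟪M p.snd, q.snd⟫_ℂ = ⟪p.snd, M q.snd⟫_ℂ := by
      rw [L2.inner_def, L2.inner_def]
      refine integral_congr_ae ?_
      filter_upwards [hM p.snd, hM q.snd] with x h1 h2
      rw [h1, h2]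
      simp
      ring
    simp only [WithLp.prod_inner_apply, T0, LinearMap.coe_mk, AddHom.coe_mk, inner_add_left,
      inner_add_right, inner_smul_left, inner_smul_right]
    simp only [RCLike.inner_apply, inner_conj_symm]
    have hc : (starRingEnd ℂ) ⟪ξ, p.snd⟫_ℂ = ⟪p.snd, ξ⟫_ℂ := inner_conj_symm _ _
    change q.fst * ⟪p.snd, ξ⟫_ℂ + ((starRingEnd ℂ) p.fst * ⟪ξ, q.snd⟫_ℂ + ⟪M p.snd, q.snd⟫_ℂ) =
      ⟪ξ, q.snd⟫_ℂ * (starRingEnd ℂ) p.fst + (q.fst * ⟪p.snd, ξ⟫_ℂ + ⟪p.snd, M q.snd⟫_ℂ)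
    linear_combination hMs
  let T : WithLp 2 (ℂ × Lp ℂ 2 μ) →L[ℂ] WithLp 2 (ℂ × Lp ℂ 2 μ) := hsym.toSelfAdjoint.1
  have hT : IsSelfAdjoint T := hsym.toSelfAdjoint.2
  have hTa : ∀ p, T p = WithLp.toLp 2 (⟪ξ, p.snd⟫_ℂ, p.fst • ξ + M p.snd) := fun p => rfl
  let e : WithLp 2 (ℂ × Lp ℂ 2 μ) := WithLp.toLp 2 (1, 0)
  have hep : ∀ p : WithLp 2 (ℂ × Lp ℂ 2 μ), ⟪e, p⟫_ℂ = p.fst := by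
    intro p
    simp [WithLp.prod_inner_apply, e]
  have hTe : T e = WithLp.toLp 2 (0, ξ) := by
    rw [hTa]; simp [e]
  obtain ⟨ν, R1, hprob, hR1, hν1, hν2, hν3⟩ := spectral_measure' T hT e (by rw [hep]; rfl)
  refine ⟨ν, max R1 R, hprob, ?_, ?_, ?_, ?_⟩
  · refine measure_mono_null ?_ hR1
    rw [Set.compl_subset_compl]
    exact Set.Icc_subset_Icc (neg_le_neg (le_max_left _ _)) (le_max_left _ _)
  · rw [hν1, hep, hTe]
    simp
  · rw [hν2, hep, hTe, hTa]
    change (⟪ξ, ξ⟫_ℂ).re = 1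
    rw [hξξ, Complex.one_re]
  · intro z hz
    have hzR : R < |z| := lt_of_le_of_lt (le_max_right _ _) hz
    have hzR1 : R1 < |z| := lt_of_le_of_lt (le_max_left _ _) hz
    have hne : ∀ r : ℝ, r < |z| → ∀ x ∈ Set.Icc (-r) r, z - x ≠ 0 := by
      intro r hr x hx h
      have : z = x := by linarith
      rw [this] at hr
      exact absurd (abs_le.2 ⟨hx.1, hx.2⟩) (not_le.2 hr)
    obtain ⟨y, hye, hI⟩ := hν3 z hzR1
    rw [hI, hep]
    have h1 : (z : ℂ) * y.fst - ⟪ξ, y.snd⟫_ℂ = 1 := by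
      exact congrArg WithLp.fst hye
    have h2 : (z : ℂ) • y.snd - (y.fst • ξ + M y.snd) = 0 := by
      exact congrArg WithLp.snd hye
    have h3 : (y.snd : ℝ → ℂ) =ᵐ[μ] fun x => y.fst * ((1 / (z - x) : ℝ) : ℂ) := by
      rw [sub_eq_zero] at h2
      have h4 := Lp.coeFn_smul (z:ℂ) y.snd
      have h5 := Lp.coeFn_add (y.fst • ξ) (M y.snd)
      have h6 := Lp.coeFn_smul y.fst ξ
      rw [h2] at h4
      filter_upwards [h4, h5, h6, hξ, hM y.snd, hae] with x a1 a2 a3 a4 a5 a6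
      rw [a1, Pi.add_apply, a3, a5] at a2
      simp only [Pi.smul_apply, smul_eq_mul, a4] at a2
      have hzx : ((z:ℂ) - x) ≠ 0 := by
        exact_mod_cast hne R hzR x a6
      push_cast
      rw [mul_one_div, eq_div_iff hzx]
      linear_combination a2
    have h7 : ⟪ξ, y.snd⟫_ℂ = y.fst * ((∫ x, 1 / (z - x) ∂μ : ℝ) : ℂ) := by
      rw [hξh, integral_congr_ae h3, integral_const_mul, integral_complex_ofReal]
    rw [h7] at h1
    have h8 := congrArg Complex.re h1
    simp at h8
    simp only [one_div]
    linarith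

lemma curve_u (B c : ℝ) (hB : 0 < B) (hc : 27 * c ^ 2 < B ^ 3) :
    ∃ (u : ℝ → ℝ) (l A : ℝ), 0 < l ∧ (∀ θ, l ≤ u θ) ∧ (∀ θ, u θ ≤ A) ∧
      (∀ θ, B < 3 * u θ ^ 2) ∧ (∀ θ, u θ ^ 3 = B * u θ + 2 * c * Real.cos θ) ∧
      (∀ θ, HasDerivAt u (-(2 * c * Real.sin θ) / (3 * u θ ^ 2 - B)) θ) ∧
      u (2 * Real.pi) = u 0 := by
  obtain ⟨l, hl, hl2⟩ : ∃ l : ℝ, 0 < l ∧ 3 * l ^ 2 = B :=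
    ⟨Real.sqrt (B / 3), by positivity, by rw [Real.sq_sqrt (by positivity)]; ring⟩
  obtain ⟨κ, hκ⟩ : ∃ κ : ℝ, κ * l ^ 3 = c := ⟨c / l ^ 3, by field_simp⟩
  have hκ1 : κ ^ 2 < 1 := by
    by_contra h
    push Not at h
    have h1 : c ^ 2 = κ ^ 2 * l ^ 6 := by rw [← hκ]; ring
    have h2 : B ^ 3 = 27 * l ^ 6 := by rw [← hl2]; ring
    have h3 : 0 < l ^ 6 := by positivity
    nlinarith
  have habs : |κ| < 1 := by
    rw [← sq_lt_one_iff_abs_lt_one]; exact hκ1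
  have hκc : ∀ θ, |κ * Real.cos θ| < 1 := by
    intro θ
    rw [abs_mul]
    have := Real.abs_cos_le_one θ
    have := abs_nonneg κ
    nlinarith [abs_nonneg (Real.cos θ)]
  let u : ℝ → ℝ := fun θ => 2 * l * Real.cos (Real.arccos (κ * Real.cos θ) / 3)
  have hcos : ∀ θ, 1 / 2 < Real.cos (Real.arccos (κ * Real.cos θ) / 3) := by
    intro θ
    have h1 : Real.arccos (κ * Real.cos θ) < Real.pi := by
      refine lt_of_le_of_ne (Real.arccos_le_pi _) ?_
      intro h
      rw [Real.arccos_eq_pi] at h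
      have := (abs_lt.1 (hκc θ)).1
      linarith
    have h0 := Real.arccos_nonneg (κ * Real.cos θ)
    rw [← Real.cos_pi_div_three]
    apply Real.cos_lt_cos_of_nonneg_of_le_pi
    · positivity
    · linarith [Real.pi_pos]
    · linarith
  have hu_l : ∀ θ, l < u θ := by
    intro θ
    have := hcos θ
    simp only [u]
    nlinarith
  have hu2 : ∀ θ, B < 3 * u θ ^ 2 := by
    intro θ
    have := hu_l θ
    nlinarith
  have hu3 : ∀ θ, u θ ^ 3 = B * u θ + 2 * c * Real.cos θ := by
    intro θ
    have h1 := Real.cos_three_mul (Real.arccos (κ * Real.cos θ) / 3)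
    rw [mul_div_cancel₀ _ (by norm_num : (3:ℝ) ≠ 0),
      Real.cos_arccos (abs_lt.1 (hκc θ)).1.le (abs_lt.1 (hκc θ)).2.le] at h1
    simp only [u]
    rw [← hl2, ← hκ]
    linear_combination (-2 * l ^ 3) * h1
  refine ⟨u, l, 2 * l, hl, fun θ => (hu_l θ).le, ?_, hu2, hu3, ?_, ?_⟩
  · intro θ
    have := Real.cos_le_one (Real.arccos (κ * Real.cos θ) / 3)
    simp only [u]
    nlinarith
  · intro θ
    have hd : DifferentiableAt ℝ u θ := by
      have h1 : DifferentiableAt ℝ Real.arccos (κ * Real.cos θ) := by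
        rw [Real.differentiableAt_arccos]
        constructor
        · exact (abs_lt.1 (hκc θ)).1.ne'
        · exact (abs_lt.1 (hκc θ)).2.ne
      have h2 : DifferentiableAt ℝ (fun θ => Real.arccos (κ * Real.cos θ)) θ :=
        DifferentiableAt.comp (g := Real.arccos) (f := fun θ => κ * Real.cos θ) θ h1 (by fun_prop)
      have h3 : DifferentiableAt ℝ (fun θ => Real.arccos (κ * Real.cos θ) / 3) θ := by fun_prop
      exact (h3.cos).const_mul (2 * l)
    have hd' := hd.hasDerivAt
    have e1 := hd'.pow 3
    have e2 := (hd'.const_mul B).add ((Real.hasDerivAt_cos θ).const_mul (2 * c))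
    have e3 : (u ^ 3) = ((fun y => B * u y) + fun y => 2 * c * Real.cos y) := by
      funext t
      exact hu3 t
    rw [e3] at e1
    have e4 := e1.unique e2
    have e5 : -(2 * c * Real.sin θ) / (3 * u θ ^ 2 - B) = deriv u θ := by
      rw [div_eq_iff (by linarith [hu2 θ])]
      norm_num at e4
      linarith
    rw [e5]
    exact hd'
  · simp only [u, Real.cos_two_pi, Real.cos_zero]

lemma push_measure (w x : ℝ → ℝ) (hw : Continuous w) (hx : Continuous x) (h0 : ∀ t, 0 ≤ w t)
    (h1 : ∫ t in (0:ℝ)..(2 * Real.pi), w t = 1) :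
    ∃ (μ : Measure ℝ) (R : ℝ), IsProbabilityMeasure μ ∧ μ (Set.Icc (-R) R)ᶜ = 0 ∧
      ∀ f : ℝ → ℝ, Measurable f → ∫ y, f y ∂μ = ∫ t in (0:ℝ)..(2 * Real.pi), w t * f (x t) := by
  have hpi : (0:ℝ) ≤ 2 * Real.pi := by positivity
  let ρ : Measure ℝ := (volume.restrict (Set.Ioc 0 (2 * Real.pi))).withDensity
    (fun t => ENNReal.ofReal (w t))
  have hf : ∀ f : ℝ → ℝ, Measurable f →
      ∫ y, f y ∂(ρ.map x) = ∫ t in (0:ℝ)..(2 * Real.pi), w t * f (x t) := by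
    intro f hf
    rw [integral_map hx.measurable.aemeasurable hf.aestronglyMeasurable]
    simp only [ρ]
    rw [integral_withDensity_eq_integral_toReal_smul (by fun_prop) (by simp),
      intervalIntegral.integral_of_le hpi]
    refine integral_congr_ae (Eventually.of_forall fun t => ?_)
    simp only [smul_eq_mul]
    rw [ENNReal.toReal_ofReal (h0 t)]
  obtain ⟨R, hR⟩ := (isCompact_Icc (a := (0:ℝ)) (b := 2 * Real.pi)).exists_bound_of_continuousOn
    hx.continuousOn
  refine ⟨ρ.map x, R, ?_, ?_, hf⟩
  · constructor
    rw [Measure.map_apply hx.measurable MeasurableSet.univ, Set.preimage_univ]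
    simp only [ρ]
    rw [withDensity_apply _ MeasurableSet.univ, Measure.restrict_univ,
      ← ofReal_integral_eq_lintegral_ofReal, ← intervalIntegral.integral_of_le hpi, h1,
      ENNReal.ofReal_one]
    · exact (hw.integrableOn_Icc).mono_set Set.Ioc_subset_Icc_self
    · exact Eventually.of_forall h0
  · rw [Measure.map_apply hx.measurable measurableSet_Icc.compl]
    have hae : ∀ᵐ t ∂ρ, x t ∈ Set.Icc (-R) R := by
      apply (withDensity_absolutelyContinuous _ _).ae_le
      filter_upwards [ae_restrict_mem measurableSet_Ioc] with t ht
      have := hR t ⟨ht.1.le, ht.2⟩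
      rw [Real.norm_eq_abs] at this
      exact abs_le.1 this
    exact hae

lemma im_ftc (F F' : ℝ → ℂ) (h : ∀ t, HasDerivAt F (F' t) t) (g : ℝ → ℝ)
    (hg : ∀ t, (F' t).im = g t) (hc : Continuous g) :
    ∫ t in (0:ℝ)..(2 * Real.pi), g t = (F (2 * Real.pi)).im - (F 0).im := by
  have hd : ∀ t, HasDerivAt (fun t => (F t).im) (g t) t := by
    intro t
    rw [← hg t]
    exact Complex.imCLM.hasFDerivAt.comp_hasDerivAt t (h t)
  exact intervalIntegral.integral_eq_sub_of_hasDerivAt (fun t _ => hd t)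
    (hc.intervalIntegrable _ _)

lemma curve_alg (a B c u C S : ℂ) (hu : u ≠ 0) (hD : 3 * u ^ 2 - B ≠ 0) (hCS : C ^ 2 + S ^ 2 = 1)
    (h3 : u ^ 3 = B * u + 2 * c * C) (m q : ℂ) (hm : m = (C - S * Complex.I) / u)
    (hmi : m⁻¹ = u * (C + S * Complex.I)) (hq : q = -(2 * c * S) / (3 * u ^ 2 - B) / u) :
    (m⁻¹ + a + B * m + c * m ^ 2 = u * C + a + B * C / u + c * (C ^ 2 - S ^ 2) / u ^ 2) ∧
    ((-m⁻¹ + B * m + 2 * c * m ^ 2) * (-Complex.I - q) =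
      -S * (3 * u ^ 2 - B) / u * (1 + q ^ 2)) := by
  have hI : Complex.I ^ 2 = -1 := Complex.I_sq
  constructor
  · rw [hmi, hm]
    field_simp
    linear_combination (S * Complex.I) * h3 + c * S ^ 2 * hI
  · have h1 : -m⁻¹ + B * m + 2 * c * m ^ 2 =
        -2 * c * S ^ 2 / u ^ 2 + Complex.I * (-S * (3 * u ^ 2 - B) / u) := by
      rw [hmi, hm]
      field_simp
      linear_combination (2 * S * Complex.I - C) * h3 + 2 * c * S ^ 2 * hI +
        2 * c * hCS * 0
    have h2 : -2 * c * S ^ 2 / u ^ 2 = -q * (-S * (3 * u ^ 2 - B) / u) := by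
      rw [hq]
      generalize 3 * u ^ 2 - B = D at hD ⊢
      field_simp
    rw [h1, h2]
    linear_combination (-(-S * (3 * u ^ 2 - B) / u)) * hI

lemma resolvent_alg (a B c m m0 : ℂ) (hm : m ≠ 0) (hm0 : m0 ≠ 0) (hne : m - m0 ≠ 0)
    (hq : 1 - B * m * m0 - c * m * m0 * (m + m0) ≠ 0) (p : ℂ) :
    m0 * (-p - m0 * (m * p) / (m ^ 2) / (1 - m0 / m) +
      (B * m + c * m * (2 * m + m0)) / (1 - B * m * m0 - c * m * m0 * (m + m0)) * (m * p)) =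
    m * ((-m⁻¹ + B * m + 2 * c * m ^ 2) * p) /
      ((1 / m0 + a + B * m0 + c * m0 ^ 2) - (m⁻¹ + a + B * m + c * m ^ 2)) := by
  have h1 : (1 / m0 + a + B * m0 + c * m0 ^ 2) - (m⁻¹ + a + B * m + c * m ^ 2) =
      (m - m0) * (1 - B * m * m0 - c * m * m0 * (m + m0)) / (m * m0) := by
    field_simp
    ring
  have h2 : 1 - m0 / m = (m - m0) / m := by field_simp
  rw [h1, h2]
  generalize hQ : 1 - B * m * m0 - c * m * m0 * (m + m0) = Q at *
  field_simp
  rw [← hQ]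
  ring

lemma curve (a B c : ℝ) (hB : 0 < B) (hc : 27 * c ^ 2 < B ^ 3) :
    ∃ (μ : Measure ℝ) (R : ℝ), IsProbabilityMeasure μ ∧ μ (Set.Icc (-R) R)ᶜ = 0 ∧
      ∃ ε > 0, ∀ m : ℝ, m ≠ 0 → |m| < ε →
        ∫ x, 1 / ((1 / m + a + B * m + c * m ^ 2) - x) ∂μ = m := by
  obtain ⟨u, l, A, hl, hlu, huA, hu2, hu3, hud, huper⟩ := curve_u B c hB hc
  have hpos : ∀ θ, 0 < u θ := fun θ => lt_of_lt_of_le hl (hlu θ)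
  have hne : ∀ θ, u θ ≠ 0 := fun θ => (hpos θ).ne'
  have hDpos : ∀ θ, 0 < 3 * u θ ^ 2 - B := fun θ => by linarith [hu2 θ]
  have hDne : ∀ θ, 3 * u θ ^ 2 - B ≠ 0 := fun θ => (hDpos θ).ne'
  have huc : Continuous u := continuous_iff_continuousAt.2 fun θ => (hud θ).continuousAt
  have hpi := Real.pi_pos
  let q : ℝ → ℝ := fun θ => -(2 * c * Real.sin θ) / (3 * u θ ^ 2 - B) / u θ
  have hqc : Continuous q := by
    simp only [q]
    fun_prop (disch := assumption)
  let m : ℝ → ℂ := fun θ => Complex.exp (-(θ * Complex.I)) / u θ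
  have hneC : ∀ θ, (u θ : ℂ) ≠ 0 := fun θ => by exact_mod_cast hne θ
  have hmne : ∀ θ, m θ ≠ 0 := fun θ => div_ne_zero (Complex.exp_ne_zero _) (hneC θ)
  have hudC : ∀ θ, HasDerivAt (fun θ => (u θ : ℂ))
      ((-(2 * c * Real.sin θ) / (3 * u θ ^ 2 - B) : ℝ) : ℂ) θ := fun θ => (hud θ).ofReal_comp
  have hm' : ∀ θ, HasDerivAt m (m θ * (-Complex.I - q θ)) θ := by
    intro θ
    have h0 : HasDerivAt (fun θ : ℝ => (θ : ℂ)) 1 θ := (hasDerivAt_id θ).ofReal_comp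
    have h1 := ((h0.mul_const Complex.I).neg.cexp).div (hudC θ) (hneC θ)
    refine h1.congr_deriv ?_
    simp only [m, q, Complex.ofReal_div, Pi.neg_apply]
    have := hneC θ
    field_simp
  have hmform : ∀ θ, m θ = ((Real.cos θ : ℂ) - Real.sin θ * Complex.I) / u θ := by
    intro θ
    simp only [m]
    rw [← neg_mul, Complex.exp_mul_I, Complex.cos_neg, Complex.sin_neg]
    push_cast
    ring
  have hmi : ∀ θ, (m θ)⁻¹ = u θ * ((Real.cos θ : ℂ) + Real.sin θ * Complex.I) := by
    intro θ
    simp only [m]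
    rw [inv_div, div_eq_mul_inv, ← Complex.exp_neg, neg_neg, Complex.exp_mul_I]
    push_cast
    ring
  have hnorm : ∀ θ, ‖m θ‖ = 1 / u θ := by
    intro θ
    simp only [m]
    rw [norm_div, Complex.norm_real, Real.norm_of_nonneg (hpos θ).le, ← neg_mul,
      ← Complex.ofReal_neg, Complex.norm_exp_ofReal_mul_I]
  have hmper : m (2 * Real.pi) = m 0 := by
    rw [hmform, hmform, huper]
    simp
  let x : ℝ → ℝ := fun θ => u θ * Real.cos θ + a + B * Real.cos θ / u θ +
    c * (Real.cos θ ^ 2 - Real.sin θ ^ 2) / u θ ^ 2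
  let y : ℝ → ℝ := fun θ => -Real.sin θ * (3 * u θ ^ 2 - B) / u θ * (1 + q θ ^ 2)
  have hxc : Continuous x := by
    simp only [x]
    fun_prop (disch := simp [hne])
  have halg : ∀ θ, ((m θ)⁻¹ + a + B * m θ + c * (m θ) ^ 2 = (x θ : ℂ)) ∧
      ((-(m θ)⁻¹ + B * m θ + 2 * c * (m θ) ^ 2) * (-Complex.I - q θ) = (y θ : ℂ)) := by
    intro θ
    have := curve_alg a B c (u θ) (Real.cos θ) (Real.sin θ) (hneC θ) (by exact_mod_cast hDne θ)
      (by exact_mod_cast Real.cos_sq_add_sin_sq θ) (by exact_mod_cast hu3 θ) (m θ) (q θ)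
      (hmform θ) (hmi θ) (by simp [q])
    refine ⟨this.1.trans ?_, this.2.trans ?_⟩
    · simp only [x]; push_cast; ring
    · simp only [y]; push_cast; ring
  let W : ℝ → ℝ := fun θ => Real.sin θ ^ 2 * (3 * u θ ^ 2 - B) / u θ ^ 2 * (1 + q θ ^ 2)
  have hWc : Continuous W := by
    simp only [W]
    fun_prop (disch := simp [hne])
  have hW0 : ∀ θ, 0 ≤ W θ := by
    intro θ
    have := hDpos θ
    simp only [W]
    positivity
  have hWim : ∀ θ, (m θ * (y θ : ℂ)).im = W θ := by
    intro θ
    have : (m θ).im = -Real.sin θ / u θ := by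
      rw [hmform, Complex.div_ofReal_im]
      simp [-Complex.ofReal_sin, -Complex.ofReal_cos]
    rw [Complex.im_mul_ofReal, this]
    simp only [y, W]
    have := hne θ
    field_simp
  have hlog : ∀ θ, HasDerivAt (fun θ : ℝ => (θ : ℂ) * Complex.I + (Real.log (u θ) : ℂ))
      (-(-Complex.I - q θ)) θ := by
    intro θ
    have h0 : HasDerivAt (fun θ : ℝ => (θ : ℂ)) 1 θ := (hasDerivAt_id θ).ofReal_comp
    have h1 := ((hud θ).log (hne θ)).ofReal_comp
    refine ((h0.mul_const Complex.I).add h1).congr_deriv ?_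
    simp only [q]
    ring
  -- total mass
  have hmass : ∫ t in (0:ℝ)..(2 * Real.pi), W t = 2 * Real.pi := by
    have hF : ∀ θ, HasDerivAt (fun θ : ℝ => (θ : ℂ) * Complex.I + (Real.log (u θ) : ℂ) +
        (B / 2 * m θ ^ 2 + 2 * c / 3 * m θ ^ 3)) (m θ * (y θ : ℂ)) θ := by
      intro θ
      have h2 := (hlog θ).add ((((hm' θ).pow 2).const_mul ((B:ℂ) / 2)).add
        (((hm' θ).pow 3).const_mul (2 * (c:ℂ) / 3)))
      refine h2.congr_deriv ?_
      rw [← (halg θ).2]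
      have := hmne θ
      field_simp
      norm_num
      ring
    rw [im_ftc _ _ hF W hWim hWc]
    simp [hmper, huper]
  obtain ⟨μ, R, hμ, hR, hint⟩ := push_measure (fun θ => W θ / (2 * Real.pi)) x (by fun_prop) hxc
    (fun t => div_nonneg (hW0 t) (by positivity))
    (by rw [intervalIntegral.integral_div, hmass]; field_simp)
  refine ⟨μ, R, hμ, hR, ?_⟩
  -- smallness
  let ρ : ℝ := 1 / l + 1
  have hρ : 1 < ρ := by
    have : 0 < 1 / l := by positivity
    simp only [ρ]; linarith
  have hmρ : ∀ θ, ‖m θ‖ < ρ := by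
    intro θ
    rw [hnorm]
    have := one_div_le_one_div_of_le hl (hlu θ)
    simp only [ρ]; linarith
  have hA : 0 < A := lt_of_lt_of_le (hpos 0) (huA 0)
  let N : ℝ := 1 + A + ρ * (B + |c| * (ρ + 1))
  have hN2 : 0 ≤ ρ * (B + |c| * (ρ + 1)) := by positivity
  have hN : 0 < N := by simp only [N]; positivity
  refine ⟨1 / N, by positivity, ?_⟩
  intro m0 hm0 hsmall
  have hsN : |m0| * N < 1 := by rwa [lt_div_iff₀ hN] at hsmall
  have hm0pos : 0 < |m0| := abs_pos.2 hm0
  have hs1 : |m0| < 1 := by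
    simp only [N] at hsN
    nlinarith
  have hsA : |m0| * A < 1 := by
    simp only [N] at hsN
    nlinarith
  have hsB : |m0| * (ρ * (B + |c| * (ρ + 1))) < 1 := by
    simp only [N] at hsN
    nlinarith
  have hm0C : (m0 : ℂ) ≠ 0 := by exact_mod_cast hm0
  have hn0 : ‖(m0 : ℂ)‖ = |m0| := by rw [Complex.norm_real, Real.norm_eq_abs]
  have hratio : ∀ θ, ‖(m0 : ℂ) / m θ‖ < 1 := by
    intro θ
    rw [norm_div, hn0, hnorm, div_div_eq_mul_div, div_one]
    exact lt_of_le_of_lt (mul_le_mul_of_nonneg_left (huA θ) hm0pos.le) hsA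
  have hmm0 : ∀ θ, m θ - m0 ≠ 0 := by
    intro θ h
    have h1 := hratio θ
    rw [← sub_eq_zero.1 h, div_self (hmne θ)] at h1
    simp at h1
  have hq0 : ∀ ζ : ℂ, ‖ζ‖ < ρ → 1 - B * ζ * m0 - c * ζ * m0 * (ζ + m0) ≠ 0 := by
    intro ζ hζ h
    have h1 : (1:ℂ) = m0 * (ζ * (B + c * (ζ + m0))) := by linear_combination h
    have h2 := congrArg norm h1
    rw [norm_one, norm_mul, norm_mul, hn0] at h2
    have h3 : ‖(B:ℂ) + c * (ζ + m0)‖ ≤ B + |c| * (ρ + 1) := by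
      refine (norm_add_le _ _).trans ?_
      rw [Complex.norm_real, Real.norm_of_nonneg hB.le, norm_mul, Complex.norm_real,
        Real.norm_eq_abs]
      have h4 : ‖ζ + (m0:ℂ)‖ ≤ ρ + 1 := by
        refine (norm_add_le _ _).trans ?_
        rw [hn0]; linarith
      have := mul_le_mul_of_nonneg_left h4 (abs_nonneg c)
      linarith
    have h5 : ‖ζ‖ * ‖(B:ℂ) + c * (ζ + m0)‖ ≤ ρ * (B + |c| * (ρ + 1)) :=
      mul_le_mul hζ.le h3 (norm_nonneg _) (by linarith)
    have := mul_le_mul_of_nonneg_left h5 hm0pos.le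
    linarith
  obtain ⟨H, hH⟩ : Complex.IsExactOn (fun ζ : ℂ => (B * ζ + c * ζ * (2 * ζ + m0)) /
      (1 - B * ζ * m0 - c * ζ * m0 * (ζ + m0))) (Metric.ball 0 ρ) := by
    apply DifferentiableOn.isExactOn_ball
    intro ζ hζ
    have := hq0 ζ (by simpa using hζ)
    apply DifferentiableAt.differentiableWithinAt
    fun_prop (disch := assumption)
  set z : ℝ := 1 / m0 + a + B * m0 + c * m0 ^ 2 with hz
  have hF : ∀ θ, HasDerivAt (fun θ : ℝ => (m0 : ℂ) * (((θ : ℂ) * Complex.I + (Real.log (u θ) : ℂ)) -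
      Complex.log (1 - m0 / m θ) + H (m θ))) (m θ * (y θ : ℂ) / ((z : ℂ) - x θ)) θ := by
    intro θ
    have h1 : HasDerivAt (fun θ : ℝ => 1 - (m0 : ℂ) / m θ)
        (m0 * (m θ * (-Complex.I - q θ)) / (m θ) ^ 2) θ := by
      have := ((hasDerivAt_const θ (m0 : ℂ)).div (hm' θ) (hmne θ)).const_sub 1
      refine this.congr_deriv ?_
      ring
    have h2 : 1 - (m0 : ℂ) / m θ ∈ Complex.slitPlane := by
      have := Complex.mem_slitPlane_of_norm_lt_one (z := -((m0:ℂ) / m θ))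
        (by rw [norm_neg]; exact hratio θ)
      rwa [← sub_eq_add_neg] at this
    have h3 := h1.clog_real h2
    have h4 : HasDerivAt (fun θ : ℝ => H (m θ)) _ θ :=
      (hH (m θ) (by simpa using hmρ θ)).comp_of_eq θ (hm' θ) rfl
    have h5 := (((hlog θ).sub h3).add h4).const_mul (m0 : ℂ)
    refine h5.congr_deriv ?_
    rw [← (halg θ).2, ← (halg θ).1]
    have := resolvent_alg a B c (m θ) m0 (hmne θ) hm0C (hmm0 θ) (hq0 _ (hmρ θ))
      (-Complex.I - q θ)
    rw [this, hz]
    push_cast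
    rfl
  have hzx : ∀ θ, z - x θ ≠ 0 := by
    intro θ h
    have h1 : (z : ℂ) - x θ = 0 := by exact_mod_cast h
    rw [← (halg θ).1, hz] at h1
    push_cast at h1
    have h2 : (1 / (m0:ℂ) + a + B * m0 + c * m0 ^ 2) - ((m θ)⁻¹ + a + B * m θ + c * (m θ) ^ 2) =
      (m θ - m0) * (1 - B * m θ * m0 - c * m θ * m0 * (m θ + m0)) / (m θ * m0) := by
      have := hmne θ
      field_simp
      ring
    rw [h2] at h1
    exact (div_ne_zero (mul_ne_zero (hmm0 θ) (hq0 _ (hmρ θ))) (mul_ne_zero (hmne θ) hm0C)) h1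
  have hfin := im_ftc _ _ hF (fun θ => W θ / (z - x θ)) (by
    intro θ
    rw [← Complex.ofReal_sub, Complex.div_ofReal_im, hWim]) (by
    fun_prop (disch := assumption))
  rw [hint (fun t => 1 / (z - t)) (by fun_prop)]
  have hrew : ∀ θ, W θ / (2 * Real.pi) * (1 / (z - x θ)) = W θ / (z - x θ) / (2 * Real.pi) := by
    intro θ; ring
  simp only [hrew]
  rw [intervalIntegral.integral_div, hfin, hmper, huper, div_eq_iff (by positivity),
    ← Complex.sub_im]
  have : (m0 : ℂ) * ((((2 * Real.pi : ℝ) : ℂ) * Complex.I + (Real.log (u 0) : ℂ)) -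
      Complex.log (1 - m0 / m 0) + H (m 0)) - m0 * ((((0:ℝ) : ℂ) * Complex.I +
      (Real.log (u 0) : ℂ)) - Complex.log (1 - m0 / m 0) + H (m 0)) =
      ((m0 * (2 * Real.pi) : ℝ) : ℂ) * Complex.I := by
    push_cast; ring
  rw [this, Complex.im_ofReal_mul, Complex.I_im, mul_one]

lemma sufficiency (a b c : ℝ) (h : 27 * c ^ 2 ≤ b ^ 3) :
    memV (fun m => 1 + a * m + b * m ^ 2 + c * m ^ 3) := by
  have hb : 0 ≤ b := by
    by_contra hb
    push Not at hb
    have : b ^ 3 < 0 := Odd.pow_neg (by decide) hb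
    nlinarith [sq_nonneg c]
  obtain ⟨μ, R, hμ, hR, ε, hε, hG⟩ := curve a (b + 1) c (by linarith)
    (by nlinarith [sq_nonneg b])
  obtain ⟨ν, R', hν, hR', hν1, hν2, hres⟩ := stripping μ R hR
  have hae : ∀ᵐ y ∂ν, y ∈ Set.Icc (-R') R' := by
    rw [ae_iff]; exact hR'
  set V : ℝ → ℝ := fun m => 1 + a * m + b * m ^ 2 + c * m ^ 3 with hVdef
  have hV0 : V 0 = 1 := by simp [hVdef]
  have hVc : Continuous V := by fun_prop
  refine ⟨ν, ⟨hν, ⟨R', hR'⟩, ?_, hν1⟩, hν2, ?_, by rw [hV0]; norm_num, ?_⟩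
  · intro t ht
    rw [ht, integral_dirac] at hν1 hν2
    rw [hν1] at hν2
    norm_num at hν2
  · simp only [hVdef]
    fun_prop
  -- smallness conditions
  have hcont : Continuous (fun m => V m + m * m - |m| * (|R'| + 1)) := by fun_prop
  have hev : ∀ᶠ m in nhds (0:ℝ), 0 < V m + m * m - |m| * (|R'| + 1) :=
    hcont.continuousAt.eventually_const_lt (by simp [hV0])
  have hev2 : ∀ᶠ m in nhds (0:ℝ), 0 < V m :=
    hVc.continuousAt.eventually_const_lt (by simp [hV0])
  obtain ⟨δ, hδ, hball⟩ := Metric.eventually_nhds_iff.1 (hev.and hev2)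
  refine ⟨min ε δ, lt_min hε hδ, ?_⟩
  intro m hm
  have hmε : |m| < ε := lt_of_lt_of_le hm (min_le_left _ _)
  obtain ⟨hm1, hm2⟩ := hball (y := m) (by
    rw [Real.dist_eq, sub_zero]; exact lt_of_lt_of_le hm (min_le_right _ _))
  have hR0 : R' ≤ |R'| := le_abs_self _
  have hden : ∀ x ∈ Set.Icc (-R') R', 0 < V m + m * (m - x) := by
    intro x hx
    have h1 : m * x ≤ |m| * |R'| := by
      calc m * x ≤ |m * x| := le_abs_self _
        _ = |m| * |x| := abs_mul _ _
        _ ≤ |m| * |R'| := by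
          exact mul_le_mul_of_nonneg_left ((abs_le.2 ⟨hx.1, hx.2⟩).trans hR0) (abs_nonneg m)
    nlinarith [abs_nonneg m]
  have hnonneg : ∀ᵐ x ∂ν, 0 ≤ cskKernel V m x := by
    filter_upwards [hae] with x hx
    exact div_nonneg hm2.le (hden x hx).le
  refine ⟨hnonneg, ?_⟩
  by_cases hm0 : m = 0
  · subst hm0
    have hk : ∀ x, cskKernel V 0 x = 1 := by
      intro x; simp [cskKernel, hV0]
    simp [hk, hν1]
  set z : ℝ := 1 / m + a + (b + 1) * m + c * m ^ 2 with hz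
  have hmz : m * z = V m + m * m := by
    simp only [hz, hVdef]; field_simp; ring
  have hzR : R' < |z| := by
    have h1 : |m| * |z| = V m + m * m := by
      rw [← abs_mul, hmz, abs_of_nonneg]; nlinarith
    have h2 : 0 < |m| := abs_pos.2 hm0
    by_contra hcon
    push Not at hcon
    nlinarith
  have hr := hres z hzR
  rw [hG m hm0 hmε] at hr
  have hk : ∀ x, cskKernel V m x = (V m / m) * (1 / (z - x)) := by
    intro x
    have : V m + m * (m - x) = m * (z - x) := by linear_combination -hmz
    rw [cskKernel, this, div_mul_div_comm, mul_one]
  have hint1 : ∫ x, cskKernel V m x ∂ν = 1 := by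
    simp only [hk]
    rw [integral_const_mul]
    have : V m / m = z - m := by field_simp; linear_combination -hmz
    rw [this, hr]
  refine ⟨hint1, ?_⟩
  have hI : Integrable (fun x => cskKernel V m x) ν := by
    by_contra hcon
    rw [integral_undef hcon] at hint1
    norm_num at hint1
  have hcongr : ∀ᵐ x ∂ν, x * cskKernel V m x =
      (V m / m + m) * cskKernel V m x - V m / m := by
    filter_upwards [hae] with x hx
    have h1 := (hden x hx).ne'
    rw [cskKernel]
    field_simp
    ring
  rw [integral_congr_ae hcongr, integral_sub (hI.const_mul _) (integrable_const _),
    integral_const_mul, hint1]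
  simp

lemma final_nec (a b c : ℝ) (h : memVinf (fun m => 1 + a * m + b * m ^ 2 + c * m ^ 3)) :
    27 * c ^ 2 ≤ b ^ 3 := by
  by_contra hcon
  push Not at hcon
  have hc0 : c ≠ 0 := by
    intro hc
    subst hc
    have hb : b < 0 := by
      by_contra hb
      push Not at hb
      have : 0 ≤ b ^ 3 := by positivity
      nlinarith
    obtain ⟨s, hs⟩ : ∃ s : ℝ, b * s ^ 2 + 1 < 0 := by
      refine ⟨1 + 1 / -b, ?_⟩
      have h1 : 0 < 1 / -b := by apply one_div_pos.2; linarith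
      have h2 : b * (1 / -b) = -1 := by
        have := hb.ne
        field_simp
      nlinarith
    refine necessity (a * s) (b * s ^ 2) 0 le_rfl ?_ ?_
    · have : (b * s ^ 2 + 1) ^ 3 < 0 := Odd.pow_neg (by decide) hs
      nlinarith
    · convert h s using 2
      ring
  -- pick s with large absolute value and the sign of c
  have hcont : Continuous (fun t : ℝ => (b + t ^ 2) ^ 3) := by fun_prop
  have hev : ∀ᶠ t in nhds (0:ℝ), (b + t ^ 2) ^ 3 < 27 * c ^ 2 :=
    hcont.continuousAt.eventually_lt_const (by simpa using hcon)
  obtain ⟨δ, hδ, hball⟩ := Metric.eventually_nhds_iff.1 hev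
  obtain ⟨t, ht0, htδ, htc⟩ : ∃ t : ℝ, t ≠ 0 ∧ |t| < δ ∧ 0 < c * t := by
    rcases lt_or_gt_of_ne hc0 with hc | hc
    · refine ⟨-(δ / 2), by linarith, ?_, by nlinarith⟩
      rw [abs_neg, abs_of_pos (by positivity)]; linarith
    · refine ⟨δ / 2, by positivity, ?_, by positivity⟩
      rw [abs_of_pos (by positivity)]; linarith
  have ht := hball (y := t) (by rw [Real.dist_eq, sub_zero]; exact htδ)
  refine necessity (a * t⁻¹) (b * (t⁻¹) ^ 2) (c * (t⁻¹) ^ 3) ?_ ?_ ?_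
  · have : c * (t⁻¹) ^ 3 = (c * t) * ((t⁻¹) ^ 2) ^ 2 := by field_simp
    rw [this]; positivity
  · have h1 : (b * (t⁻¹) ^ 2 + 1) ^ 3 = (b + t ^ 2) ^ 3 * ((t⁻¹) ^ 2) ^ 3 := by
      rw [← mul_pow]; congr 1; field_simp
    have h2 : 27 * (c * (t⁻¹) ^ 3) ^ 2 = 27 * c ^ 2 * ((t⁻¹) ^ 2) ^ 3 := by ring
    rw [h1, h2]
    have : 0 < ((t⁻¹) ^ 2) ^ 3 := by positivity
    nlinarith
  · convert h t⁻¹ using 2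
    ring

/-- A cubic function `V(m) = 1 + a·m + b·m² + c·m³` is in `𝒱∞` iff `b³ ≥ 27c²`. -/
theorem cubic_in_Vinf_iff (a b c : ℝ) :
    memVinf (fun m => 1 + a * m + b * m ^ 2 + c * m ^ 3) ↔ b ^ 3 ≥ 27 * c ^ 2 := by
  constructor
  · exact final_nec a b c
  · intro h s
    have h1 : 27 * (c * s ^ 3) ^ 2 ≤ (b * s ^ 2) ^ 3 := by
      have : 0 ≤ s ^ 6 := by positivity
      have := mul_le_mul_of_nonneg_right h this
      nlinarith
    convert sufficiency (a * s) (b * s ^ 2) (c * s ^ 3) h1 using 2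
    ring
end
end

section
/- If the function V(m) belongs to the class 𝒱 and c ≥ 1 is a real number, then the function m ↦ V(m/c) also belongs to 𝒱. -/
open MeasureTheory Filter

noncomputable section

open scoped CompactlySupported

section spectralPart

variable {H : Type*} [NormedAddCommGroup H] [InnerProductSpace ℂ H] [CompleteSpace H]

theorem spectral_measure_s2 (X : H →L[ℂ] H) (hX : IsSelfAdjoint X) (Ω : H) (hΩ : ‖Ω‖ = 1) :
    ∃ μ : Measure ℝ, IsProbabilityMeasure μ ∧ μ (spectrum ℝ X)ᶜ = 0 ∧
      ∀ f : ℝ → ℝ, ContinuousOn f (spectrum ℝ X) →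
        ∫ x, f x ∂μ = (inner ℂ Ω (cfc f X Ω)).re := by
  have hcomp : CompactSpace (spectrum ℝ X) := inferInstance
  let L : C(spectrum ℝ X, ℝ) →ₗ[ℝ] ℝ :=
    { toFun := fun f => (inner ℂ Ω (cfcHom hX f Ω)).re
      map_add' := by intro f g; simp
      map_smul' := by
        intro r f
        simp only [map_smul, RingHom.id_apply, smul_apply]
        rw [← Complex.coe_smul, inner_smul_right]; simp }
  have hL : ∀ f : C(spectrum ℝ X, ℝ), 0 ≤ f → 0 ≤ L f := by
    intro f hf
    have h1 : 0 ≤ cfcHom hX f := by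
      exact cfcHom_nonneg_iff hX |>.2 hf
    have h2 := (ContinuousLinearMap.nonneg_iff_isPositive _).1 h1
    exact h2.re_inner_nonneg_right Ω
  let Λ : C_c(spectrum ℝ X, ℝ) →ₚ[ℝ] ℝ := PositiveLinearMap.mk₀
    { toFun := fun f => L f.toContinuousMap
      map_add' := fun f g => L.map_add _ _
      map_smul' := fun r f => L.map_smul r _ }
    (by intro f hf; exact hL _ (by intro x; exact hf x))
  have key : ∀ f : C(spectrum ℝ X, ℝ), ∫ x, f x ∂(RealRMK.rieszMeasure Λ) = L f := by
    intro f
    have := RealRMK.integral_rieszMeasure Λ (CompactlySupportedContinuousMap.continuousMapEquiv f)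
    exact this
  have hone : ∫ x, (1:ℝ) ∂(RealRMK.rieszMeasure Λ) = 1 := by
    have := key 1
    simp only [ContinuousMap.one_apply] at this
    rw [this]
    simp [L, hΩ]
  have hprob : IsProbabilityMeasure (RealRMK.rieszMeasure Λ) := by
    constructor
    simp [Measure.real] at hone
    exact (ENNReal.toReal_eq_one_iff _).1 hone
  have hm : Measurable (Subtype.val : spectrum ℝ X → ℝ) := measurable_subtype_coe
  have hE : MeasurableEmbedding (Subtype.val : spectrum ℝ X → ℝ) :=
    MeasurableEmbedding.subtype_coe (spectrum.isClosed X).measurableSet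
  refine ⟨(RealRMK.rieszMeasure Λ).map Subtype.val, Measure.isProbabilityMeasure_map hm.aemeasurable, ?_, ?_⟩
  · rw [hE.map_apply]; simp
  · intro f hf
    rw [hE.integral_map, cfc_apply f X hX hf]
    exact key ⟨_, hf.domRestrict⟩

theorem kernel_step (Y : H →L[ℂ] H) (hY : IsSelfAdjoint Y) (Ω ψ : H) (v M : ℝ) (hv : 0 < v) (hM : M ≠ 0)
    (hD : ∀ x ∈ spectrum ℝ Y, v + M * (M - x) ≠ 0)
    (hψ : Y ψ = ((M + v / M : ℝ) : ℂ) • (ψ - Ω) + (M : ℂ) • Ω) :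
    cfc (fun x : ℝ => v / (v + M * (M - x))) Y Ω = ψ ∧
    cfc (fun x : ℝ => x * (v / (v + M * (M - x)))) Y Ω = Y ψ := by
  have hc : ContinuousOn (fun x : ℝ => v / (v + M * (M - x))) (spectrum ℝ Y) :=
    ContinuousOn.div (by fun_prop) (by fun_prop) hD
  have h1 : cfc (fun x : ℝ => v / (v + M * (M - x))) Y * cfc (fun x : ℝ => (v + M * M) - M * x) Y
      = algebraMap ℝ _ v := by
    rw [← cfc_mul _ _ Y hc (by fun_prop), ← cfc_const v Y]
    refine cfc_congr fun x hx => ?_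
    have := hD x hx
    rw [show v + M * M - M * x = v + M * (M - x) by ring, div_mul_cancel₀ _ this]
  have h2 : cfc (fun x : ℝ => (v + M * M) - M * x) Y = algebraMap ℝ _ (v + M * M) - M • Y := by
    rw [cfc_sub _ _ Y, cfc_const _ Y, cfc_const_mul_id _ Y]
  have h3 : (algebraMap ℝ (H →L[ℂ] H) (v + M * M) - M • Y) ψ = (v : ℂ) • Ω := by
    have hMc : (M : ℂ) ≠ 0 := by exact_mod_cast hM
    have h4 : (algebraMap ℝ (H →L[ℂ] H) (v + M * M)) ψ = ((v + M * M : ℝ) : ℂ) • ψ := by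
      rw [Algebra.algebraMap_eq_smul_one, Complex.coe_smul]; rfl
    rw [sub_apply, h4, smul_apply, hψ, ← Complex.coe_smul]
    match_scalars <;> · push_cast; field_simp; ring
  rw [h2] at h1
  have h5 : cfc (fun x : ℝ => v / (v + M * (M - x))) Y Ω = ψ := by
    have := congrArg (fun T : H →L[ℂ] H => T ψ) h1
    simp only [mul_apply_eq_comp, h3, map_smul] at this
    rw [Algebra.algebraMap_eq_smul_one, smul_apply, ← Complex.coe_smul] at this
    have hvc : (v : ℂ) ≠ 0 := by exact_mod_cast hv.ne'
    exact smul_right_injective H hvc this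
  refine ⟨h5, ?_⟩
  rw [cfc_mul (fun x : ℝ => x) _ Y (by fun_prop) hc, cfc_id' ℝ Y, mul_apply_eq_comp, h5]

end spectralPart
open scoped InnerProductSpace

theorem inner_zero_of_hasSum {E : Type*} [NormedAddCommGroup E] [InnerProductSpace ℂ E]
    {ι : Type*} {f : ι → E} {a : E} (h : HasSum f a) (x : E) (hx : ∀ i, inner ℂ x (f i) = 0) :
    inner ℂ x a = 0 := by
  have := h.mapL (innerSL ℂ x)
  simp only [innerSL_apply_apply, hx] at this
  exact this.unique hasSum_zero

/-- Existence of an isometry `H ⊗ K → H` whose range misses a unit vector. -/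
theorem exists_shift (K : Type*) [NormedAddCommGroup K] [InnerProductSpace ℂ K] [CompleteSpace K]
    {ι : Type*} (b : HilbertBasis ι ℂ K) :
    ∃ (J : lp (fun _ : List ι => K) 2 →ₗᵢ[ℂ] lp (fun _ : List ι => ℂ) 2)
      (Ω : lp (fun _ : List ι => ℂ) 2), ‖Ω‖ = 1 ∧ ∀ F, inner ℂ Ω (J F) = 0 := by
  classical
  let H := lp (fun _ : List ι => ℂ) 2
  let δ : List ι → H := fun l => lp.single 2 l (1:ℂ)
  have hδ : ∀ l l', inner ℂ (δ l) (δ l') = if l = l' then (1:ℂ) else 0 := by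
    intro l l'
    simp only [δ]
    rw [lp.inner_single_left]
    by_cases h : l = l'
    · subst h; simp [lp.single_apply]
    · rw [lp.single_apply_ne _ _ _ h, if_neg h, inner_zero_right]
  have hon : ∀ l : List ι, Orthonormal ℂ (fun i : ι => δ (i :: l)) := by
    intro l
    rw [orthonormal_iff_ite]
    intro i j
    rw [hδ]; simp
  let W : List ι → K →ₗᵢ[ℂ] H := fun l =>
    ((hon l).orthogonalFamily.linearIsometry).comp b.repr.toLinearIsometry
  have hW : ∀ l k, ∀ x : H, (∀ i, inner ℂ x (δ (i :: l)) = 0) → inner ℂ x (W l k) = 0 := by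
    intro l k x hx
    refine inner_zero_of_hasSum ((hon l).orthogonalFamily.hasSum_linearIsometry (b.repr k)) x ?_
    intro i
    simp only [LinearIsometry.toSpanSingleton_apply, inner_smul_right, hx, mul_zero]
  have hWo : OrthogonalFamily ℂ (fun _ : List ι => K) W := by
    intro l l' hll k k'
    refine hW l' k' _ (fun i => ?_)
    rw [← inner_conj_symm, hW l k _ (fun j => ?_), map_zero]
    rw [hδ, if_neg]
    intro h; exact hll (List.cons.inj h).2.symm
  refine ⟨hWo.linearIsometry, δ [], ?_, ?_⟩
  · simp only [δ]; rw [lp.norm_single (by norm_num)]; simp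
  · intro F
    refine inner_zero_of_hasSum (hWo.hasSum_linearIsometry F) _ (fun l => hW _ _ _ fun i => ?_)
    rw [hδ, if_neg]; simp

section amp
variable {S : Type*} {E F G : Type*}
  [NormedAddCommGroup E] [InnerProductSpace ℂ E] [NormedAddCommGroup F] [InnerProductSpace ℂ F]
  [NormedAddCommGroup G] [InnerProductSpace ℂ G]

noncomputable def amp (S : Type*) (T : E →L[ℂ] F) :
    lp (fun _ : S => E) 2 →L[ℂ] lp (fun _ : S => F) 2 :=
  lp.mapCLM 2 (fun _ => T) (norm_nonneg T) (fun _ => le_rfl)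

theorem amp_apply (T : E →L[ℂ] F) (f : lp (fun _ : S => E) 2) (l : S) :
    amp S T f l = T (f l) := rfl

theorem amp_norm_le (T : E →L[ℂ] F) : ‖amp S T‖ ≤ ‖T‖ :=
  lp.norm_mapCLM_le _ _ _ _

theorem amp_comp (T : E →L[ℂ] F) (T' : F →L[ℂ] G) (f : lp (fun _ : S => E) 2) :
    amp S T' (amp S T f) = amp S (T' ∘L T) f := rfl

theorem amp_adjoint [CompleteSpace E] [CompleteSpace F] (T : E →L[ℂ] F) :
    (amp S T).adjoint = amp S T.adjoint := by
  symm
  rw [ContinuousLinearMap.eq_adjoint_iff]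
  intro x y
  rw [lp.inner_eq_tsum, lp.inner_eq_tsum]
  refine tsum_congr fun l => ?_
  rw [amp_apply, amp_apply, ContinuousLinearMap.adjoint_inner_left]
end amp

/-- The Fock space model. -/
theorem fock_model {K : Type*} [NormedAddCommGroup K] [InnerProductSpace ℂ K] [CompleteSpace K]
    {H M : Type*} [NormedAddCommGroup H] [InnerProductSpace ℂ H] [CompleteSpace H]
    [NormedAddCommGroup M] [InnerProductSpace ℂ M] [CompleteSpace M]
    (J : M →ₗᵢ[ℂ] H) (Ω : H) (hΩ : ‖Ω‖ = 1) (hJ : ∀ F, inner ℂ Ω (J F) = 0)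
    (A : K → H →L[ℂ] M) (hAn : ∀ k, ‖A k‖ ≤ ‖k‖) (BM : M →L[ℂ] M) (hBM : IsSelfAdjoint BM)
    (e : K) (hA : ∀ k x, (A e).adjoint (A k x) = (inner ℂ e k : ℂ) • x)
    (t s : ℝ) :
    ∃ X : H →L[ℂ] H, IsSelfAdjoint X ∧ inner ℂ Ω (X Ω) = 0 ∧ inner ℂ Ω (X (X Ω)) = (s:ℂ) ^ 2 * inner ℂ e e ∧
      ∀ (u : K) (w m : ℂ), (∀ x, BM (A u x) = w • A u x - A e x) → inner ℂ e u = m →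
        |t| * ‖u‖ < 1 → ∃ ψ : H, inner ℂ Ω ψ = 1 ∧
          X ψ = (w + t ^ 2 * m) • (ψ - Ω) + ((s:ℂ) ^ 2 * m) • Ω := by
  let j : M →L[ℂ] H := J.toContinuousLinearMap
  have hjJ : ∀ F, j.adjoint (J F) = F := by
    intro F
    refine ext_inner_left ℂ fun y => ?_
    rw [ContinuousLinearMap.adjoint_inner_right]
    exact J.inner_map_map y F
  have hjΩ : j.adjoint Ω = 0 := by
    refine ext_inner_right ℂ fun y => ?_
    rw [ContinuousLinearMap.adjoint_inner_left, inner_zero_left]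
    exact hJ y
  have hJ' : ∀ F, inner ℂ (J F) Ω = 0 := fun F => by rw [← inner_conj_symm, hJ, map_zero]
  have hΩΩ : inner ℂ Ω Ω = (1:ℂ) := by simp [inner_self_eq_norm_sq_to_K, hΩ]
  -- rank one projection
  let P : H →L[ℂ] H := InnerProductSpace.rankOne ℂ Ω Ω
  have hP : ∀ x, P x = (inner ℂ Ω x : ℂ) • Ω := fun x => rfl
  have hPs : P.adjoint = P := by simp [P]
  let Q : H →L[ℂ] H := (t:ℂ) • (1 - P) + (s:ℂ) • P
  have hQs : Q.adjoint = Q := by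
    have h1 : (1 : H →L[ℂ] H).adjoint = 1 := by
      rw [← ContinuousLinearMap.star_eq_adjoint, star_one]
    simp only [Q, map_add, map_smulₛₗ, map_sub, hPs, h1, Complex.conj_ofReal]
  have hQ : ∀ x, Q x = (t:ℂ) • (x - (inner ℂ Ω x : ℂ) • Ω) + (s:ℂ) • (inner ℂ Ω x : ℂ) • Ω := by
    intro x; simp [Q, hP]
  let C : H →L[ℂ] H := j ∘L A e ∘L Q
  let X : H →L[ℂ] H := j ∘L BM ∘L j.adjoint + C + C.adjoint
  have hC' : ∀ x, C.adjoint x = Q ((A e).adjoint (j.adjoint x)) := by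
    intro x; simp [C, ContinuousLinearMap.adjoint_comp, hQs]
  have hX : ∀ x, X x = J (BM (j.adjoint x)) + J (A e (Q x)) + Q ((A e).adjoint (j.adjoint x)) := by
    intro x
    simp only [X, add_apply, hC']; rfl
  have hQΩ : Q Ω = (s:ℂ) • Ω := by rw [hQ, hΩΩ]; simp
  have hXΩ : X Ω = (s:ℂ) • J (A e Ω) := by
    rw [hX, hjΩ, hQΩ]; simp [-Complex.coe_smul]
  have hXJ : ∀ F, X (J F) = J (BM F) + (t:ℂ) • J (A e (J F)) + Q ((A e).adjoint F) := by
    intro F; rw [hX, hjJ, hQ (J F), hJ]; simp [-Complex.coe_smul]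
  refine ⟨X, ?_, ?_, ?_, ?_⟩
  · have hBM' : BM.adjoint = BM := hBM
    rw [ContinuousLinearMap.isSelfAdjoint_iff']
    simp only [X, map_add, ContinuousLinearMap.adjoint_comp, ContinuousLinearMap.adjoint_adjoint, hBM', ContinuousLinearMap.comp_assoc]
    abel
  · rw [hXΩ, inner_smul_right, hJ, mul_zero]
  · rw [hXΩ, map_smul, hXJ, hA, map_smul, hQΩ]
    simp only [inner_smul_right, inner_add_right, hJ, hΩΩ]
    ring
  · intro u w m hB hm hu
    let N : H →L[ℂ] H := (t:ℂ) • (j ∘L A u)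
    have hN : ‖N‖ < 1 := by
      have h1 : ‖j ∘L A u‖ ≤ 1 * ‖u‖ := by
        refine (ContinuousLinearMap.opNorm_comp_le _ _).trans ?_
        gcongr
        · exact J.norm_toContinuousLinearMap_le
        · exact hAn u
      calc ‖N‖ ≤ ‖(t:ℂ)‖ * ‖j ∘L A u‖ := norm_smul_le _ _
        _ ≤ |t| * ‖u‖ := by
          rw [Complex.norm_real, Real.norm_eq_abs]; gcongr; simpa using h1
        _ < 1 := hu
    obtain ⟨φ, hφ⟩ : ∃ φ : H, φ = Ω + (t:ℂ) • J (A u φ) := by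
      have hun : IsUnit (1 - N) := isUnit_one_sub_of_norm_lt_one hN
      obtain ⟨U, hU⟩ := hun
      refine ⟨(↑U⁻¹ : H →L[ℂ] H) Ω, ?_⟩
      have h2 : ((1 - N) * (↑U⁻¹ : H →L[ℂ] H)) Ω = Ω := by rw [← hU]; simp
      have h3 : (↑U⁻¹ : H →L[ℂ] H) Ω - N ((↑U⁻¹ : H →L[ℂ] H) Ω) = Ω := h2
      exact eq_add_of_sub_eq h3
    refine ⟨Ω + (s:ℂ) • J (A u φ), ?_, ?_⟩
    · rw [inner_add_right, inner_smul_right, hJ, hΩΩ]; simp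
    · have hφ1 : inner ℂ Ω φ = (1:ℂ) := by
        rw [hφ, inner_add_right, inner_smul_right, hJ, hΩΩ]; simp
      have hQφ : Q φ = ((t:ℂ)^2) • J (A u φ) + (s:ℂ) • Ω := by
        rw [hQ, hφ1]
        have : φ - (1:ℂ) • Ω = (t:ℂ) • J (A u φ) := by
          rw [one_smul]; exact sub_eq_of_eq_add' hφ
        rw [this, smul_smul, one_smul, sq]
      have hAe : (t:ℂ) • J (A e (J (A u φ))) = J (A e φ) - J (A e Ω) := by
        rw [← map_smul, ← map_smul, ← map_sub, ← map_sub]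
        congr 2
        exact (sub_eq_of_eq_add' hφ).symm
      rw [map_add, map_smul, hXΩ, hXJ, hAe, hA, hB, hm, map_smul, hQφ, map_sub, map_smul]
      module
open scoped InnerProductSpace ENNReal

theorem L2_model (ν : Measure ℝ) [IsProbabilityMeasure ν] (R : ℝ) (hR : ∀ᵐ x ∂ν, |x| ≤ R)
    (h0 : ∫ x, x ∂ν = 0) :
    ∃ (B : Lp ℂ 2 ν →L[ℂ] Lp ℂ 2 ν) (e : Lp ℂ 2 ν), IsSelfAdjoint B ∧
      inner ℂ e e = ((∫ x, x ^ 2 ∂ν : ℝ) : ℂ) ∧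
      ∀ (u : ℝ → ℝ) (w m C : ℝ), Measurable u → 0 ≤ C → (∀ᵐ x ∂ν, |u x| ≤ C) → ∫ x, u x ∂ν = 0 →
        (∀ᵐ x ∂ν, (w - x) * u x = x - m) →
        ∃ u' : Lp ℂ 2 ν, B u' = (w : ℂ) • u' - e ∧ inner ℂ e u' = ((∫ x, x * u x ∂ν : ℝ) : ℂ) ∧
          ‖u'‖ ≤ C := by
  have hmem : ∀ (p : ℝ≥0∞) (u : ℝ → ℝ) (C : ℝ), Measurable u → (∀ᵐ x ∂ν, |u x| ≤ C) →
      MemLp (fun x => (u x : ℂ)) p ν := by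
    intro p u C hu hC
    refine MemLp.of_bound (by fun_prop) C ?_
    filter_upwards [hC] with x hx
    simpa using hx
  have hx2 := hmem 2 (fun x => x) R measurable_id hR
  have hxt := hmem ∞ (fun x => x) R measurable_id hR
  have h12 := hmem 2 (fun _ => 1) 1 measurable_const (by simp)
  set e : Lp ℂ 2 ν := hx2.toLp
  set o : Lp ℂ 2 ν := h12.toLp
  set g : Lp ℂ ∞ ν := hxt.toLp
  have he : e =ᵐ[ν] fun x => (x : ℂ) := hx2.coeFn_toLp
  have ho : o =ᵐ[ν] fun x => ((1:ℝ) : ℂ) := h12.coeFn_toLp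
  have hg : g =ᵐ[ν] fun x => (x : ℂ) := hxt.coeFn_toLp
  have hinner : ∀ (f h : ℝ → ℝ) (F G : Lp ℂ 2 ν), F =ᵐ[ν] (fun x => (f x : ℂ)) →
      G =ᵐ[ν] (fun x => (h x : ℂ)) → inner ℂ F G = ((∫ x, f x * h x ∂ν : ℝ) : ℂ) := by
    intro f h F G hF hG
    rw [L2.inner_def, ← integral_complex_ofReal]
    refine integral_congr_ae ?_
    filter_upwards [hF, hG] with x h1 h2
    rw [h1, h2]; simp [mul_comm]
  let Mx : Lp ℂ 2 ν →L[ℂ] Lp ℂ 2 ν := (ContinuousLinearMap.mul ℂ ℂ).holderL ν ∞ 2 2 g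
  have hMx : ∀ f : Lp ℂ 2 ν, Mx f =ᵐ[ν] fun x => (x : ℂ) * f x := by
    intro f
    have h1 : Mx f =ᵐ[ν] fun x => (ContinuousLinearMap.mul ℂ ℂ) (g x) (f x) :=
      (ContinuousLinearMap.mul ℂ ℂ).coeFn_holder g f
    filter_upwards [h1, hg] with x h1 h2
    rw [h1, h2]; rfl
  have hMs : Mx.adjoint = Mx := by
    symm
    rw [ContinuousLinearMap.eq_adjoint_iff]
    intro f h
    rw [L2.inner_def, L2.inner_def]
    refine integral_congr_ae ?_
    filter_upwards [hMx f, hMx h] with x h1 h2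
    rw [h1, h2]; simp; ring
  let P : Lp ℂ 2 ν →L[ℂ] Lp ℂ 2 ν := 1 - InnerProductSpace.rankOne ℂ o o
  have hP : ∀ f, P f = f - (inner ℂ o f : ℂ) • o := fun f => rfl
  have hPs : P.adjoint = P := by
    have h1 : (1 : Lp ℂ 2 ν →L[ℂ] Lp ℂ 2 ν).adjoint = 1 := by
      rw [← ContinuousLinearMap.star_eq_adjoint, star_one]
    simp only [P, map_sub, h1]
    simp
  have hoo : inner ℂ o o = (1:ℂ) := by
    rw [hinner _ _ o o ho ho]; simp
  have hoe : inner ℂ o e = (0:ℂ) := by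
    rw [hinner _ _ o e ho he]; simp [h0]
  refine ⟨P ∘L Mx ∘L P, e, ?_, ?_, ?_⟩
  · rw [ContinuousLinearMap.isSelfAdjoint_iff']
    simp only [ContinuousLinearMap.adjoint_comp, hPs, hMs, ContinuousLinearMap.comp_assoc]
  · rw [hinner _ _ e e he he]; simp [sq]
  · intro u w m C hu hC0 hC hu0 hw
    have hu2 := hmem 2 u C hu hC
    set u' : Lp ℂ 2 ν := hu2.toLp
    have hu' : u' =ᵐ[ν] fun x => (u x : ℂ) := hu2.coeFn_toLp
    have hou : inner ℂ o u' = (0:ℂ) := by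
      rw [hinner _ _ o u' ho hu']; simp [hu0]
    have hPu : P u' = u' := by rw [hP, hou]; simp
    have hM : Mx u' = (w:ℂ) • u' - e + (m:ℂ) • o := by
      refine Lp.ext ?_
      filter_upwards [hMx u', hu', he, ho, hw, Lp.coeFn_add ((w:ℂ) • u' - e) ((m:ℂ) • o),
        Lp.coeFn_sub ((w:ℂ) • u') e, Lp.coeFn_smul (w:ℂ) u', Lp.coeFn_smul (m:ℂ) o]
        with x a1 a2 a3 a4 a5 a6 a7 a8 a9
      simp only [a1, a6, a7, a8, a9, Pi.add_apply, Pi.sub_apply, Pi.smul_apply, a2, a3, a4, smul_eq_mul]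
      have : ((w - x) * u x : ℂ) = x - m := by exact_mod_cast a5
      push_cast
      linear_combination -this
    refine ⟨u', ?_, ?_, ?_⟩
    · simp only [ContinuousLinearMap.comp_apply]
      rw [hPu, hM, hP]
      simp only [inner_add_right, inner_sub_right, inner_smul_right, hou, hoe, hoo]
      module
    · exact hinner _ _ e u' he hu'
    · have := Lp.norm_le_of_ae_bound (f := u') hC0 (by
        filter_upwards [hu', hC] with x h1 h2
        rw [h1]; simpa using h2)
      simpa [measureUnivNNReal] using this

/-- Combination of the `L²` model and the Fock space construction. -/
theorem free_power_model (ν : Measure ℝ) [IsProbabilityMeasure ν] (R : ℝ)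
    (hR : ∀ᵐ x ∂ν, |x| ≤ R) (h0 : ∫ x, x ∂ν = 0) (t s : ℝ) :
    ∃ (H : Type) (_ : NormedAddCommGroup H) (_ : InnerProductSpace ℂ H) (_ : CompleteSpace H)
      (Ω : H) (X : H →L[ℂ] H), ‖Ω‖ = 1 ∧ IsSelfAdjoint X ∧ inner ℂ Ω (X Ω) = (0:ℂ) ∧
      inner ℂ Ω (X (X Ω)) = (s:ℂ) ^ 2 * ((∫ x, x ^ 2 ∂ν : ℝ) : ℂ) ∧
      ∀ (u : ℝ → ℝ) (w m C : ℝ), Measurable u → 0 ≤ C → (∀ᵐ x ∂ν, |u x| ≤ C) → ∫ x, u x ∂ν = 0 →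
        (∀ᵐ x ∂ν, (w - x) * u x = x - m) → ∫ x, x * u x ∂ν = m → |t| * C < 1 →
        ∃ ψ : H, inner ℂ Ω ψ = (1:ℂ) ∧
          X ψ = ((w:ℂ) + t ^ 2 * m) • (ψ - Ω) + ((s:ℂ) ^ 2 * m) • Ω := by
  obtain ⟨B, e, hB, hee, hu⟩ := L2_model ν R hR h0
  obtain ⟨ι, b, -⟩ := exists_hilbertBasis ℂ (Lp ℂ 2 ν)
  obtain ⟨J, Ω, hΩ, hJ⟩ := exists_shift (Lp ℂ 2 ν) b
  let A : Lp ℂ 2 ν → lp (fun _ : List ι => ℂ) 2 →L[ℂ] lp (fun _ : List ι => Lp ℂ 2 ν) 2 :=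
    fun k => amp (List ι) (ContinuousLinearMap.toSpanSingleton ℂ k)
  have hAn : ∀ k, ‖A k‖ ≤ ‖k‖ := fun k =>
    (amp_norm_le _).trans (ContinuousLinearMap.norm_toSpanSingleton k).le
  have hA : ∀ k x, (A e).adjoint (A k x) = (inner ℂ e k : ℂ) • x := by
    intro k x
    simp only [A]
    rw [amp_adjoint]
    refine lp.ext (funext fun l => ?_)
    rw [amp_apply, amp_apply]
    refine ext_inner_left ℂ fun y => ?_
    rw [ContinuousLinearMap.adjoint_inner_right]
    simp [inner_smul_left, inner_smul_right]
    ring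
  have hBM : IsSelfAdjoint (amp (List ι) B) := by
    rw [ContinuousLinearMap.isSelfAdjoint_iff', amp_adjoint]
    rw [ContinuousLinearMap.isSelfAdjoint_iff'] at hB
    rw [hB]
  obtain ⟨X, hX, hX1, hX2, hX3⟩ := fock_model J Ω hΩ hJ A hAn (amp (List ι) B) hBM e hA t s
  refine ⟨_, _, _, inferInstance, Ω, X, hΩ, hX, hX1, by rw [hX2, hee], ?_⟩
  intro u w m C hum hC0 hC hu0 hw hm ht
  obtain ⟨u', h1, h2, h3⟩ := hu u w m C hum hC0 hC hu0 hw
  refine hX3 u' w m ?_ (by rw [h2, hm]) (lt_of_le_of_lt (by gcongr) ht)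
  intro x
  refine lp.ext (funext fun l => ?_)
  have : ∀ k, A k x l = x l • k := fun k => rfl
  rw [amp_apply, lp.coeFn_sub, Pi.sub_apply, lp.coeFn_smul, Pi.smul_apply, this, this, map_smul, h1]
  module

theorem memV_core (V : ℝ → ℝ) (c : ℝ) (hc : 1 ≤ c) (ν : Measure ℝ) [IsProbabilityMeasure ν] (R : ℝ)
    (hRae : ∀ᵐ x ∂ν, |x| ≤ R) (hmean : ∫ x, x ∂ν = 0) (hvar : ∫ x, x ^ 2 ∂ν = 1)
    (hVa : AnalyticAt ℝ V 0) (hV0 : 0 < V 0) (ε : ℝ) (hε : 0 < ε)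
    (hker : ∀ m : ℝ, |m| < ε → (∀ᵐ x ∂ν, 0 ≤ cskKernel V m x) ∧
      (∫ x, cskKernel V m x ∂ν) = 1 ∧ (∫ x, x * cskKernel V m x ∂ν) = m)
    (t : ℝ) (ht2 : t ^ 2 = c ^ 2 - 1)
    {H : Type} [NormedAddCommGroup H] [InnerProductSpace ℂ H] [CompleteSpace H]
    (Ω : H) (X : H →L[ℂ] H) (hΩ : ‖Ω‖ = 1) (hX : IsSelfAdjoint X) (hX1 : inner ℂ Ω (X Ω) = (0:ℂ))
    (hX2 : inner ℂ Ω (X (X Ω)) = (c:ℂ) ^ 2 * ((∫ x, x ^ 2 ∂ν : ℝ) : ℂ))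
    (hX3 : ∀ (u : ℝ → ℝ) (w m C : ℝ), Measurable u → 0 ≤ C → (∀ᵐ x ∂ν, |u x| ≤ C) →
        ∫ x, u x ∂ν = 0 →
        (∀ᵐ x ∂ν, (w - x) * u x = x - m) → ∫ x, x * u x ∂ν = m → |t| * C < 1 →
        ∃ ψ : H, inner ℂ Ω ψ = (1:ℂ) ∧
          X ψ = ((w:ℂ) + t ^ 2 * m) • (ψ - Ω) + ((c:ℂ) ^ 2 * m) • Ω) :
    memV (fun m => V (m / c)) := by
  have hc0 : 0 < c := by linarith
  have hcc : (c:ℂ) ≠ 0 := by exact_mod_cast hc0.ne'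
  obtain ⟨Y, hYdef⟩ : ∃ Y : H →L[ℂ] H, Y = (((c⁻¹ : ℝ) : ℂ)) • X := ⟨_, rfl⟩
  have hYX : ∀ x, Y x = (c:ℂ)⁻¹ • X x := by
    intro x
    rw [hYdef, smul_apply, Complex.ofReal_inv]
  have hY : IsSelfAdjoint Y := by
    rw [ContinuousLinearMap.isSelfAdjoint_iff'] at hX ⊢
    rw [hYdef, map_smulₛₗ, hX, Complex.conj_ofReal]
  obtain ⟨μ, hμ, hμs, hμf⟩ := spectral_measure_s2 Y hY Ω hΩ
  have hspec : ∀ x ∈ spectrum ℝ Y, |x| ≤ ‖Y‖ * ‖(1 : H →L[ℂ] H)‖ := by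
    intro x hx
    simpa using spectrum.norm_le_norm_mul_of_mem hx
  set R' : ℝ := ‖Y‖ * ‖(1 : H →L[ℂ] H)‖
  have hμae : ∀ᵐ x ∂μ, x ∈ spectrum ℝ Y := hμs
  have hμ1 : ∫ x, x ∂μ = 0 := by
    rw [hμf (fun x => x) (by fun_prop), cfc_id' ℝ Y, hYX, inner_smul_right, hX1]; simp
  have hμ2 : ∫ x, x ^ 2 ∂μ = 1 := by
    rw [hμf (fun x => x ^ 2) (by fun_prop), cfc_pow_id Y 2, sq, mul_apply_eq_comp, hYX, hYX, map_smul,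
      inner_smul_right, inner_smul_right, hX2, hvar]
    have : (c:ℂ)⁻¹ * ((c:ℂ)⁻¹ * ((c:ℂ) ^ 2 * ((1:ℝ):ℂ))) = 1 := by
      push_cast; field_simp
    rw [this]; simp
  refine ⟨μ, ⟨hμ, ⟨R', ?_⟩, ?_, hμ1⟩, hμ2, ?_⟩
  · refine measure_mono_null (Set.compl_subset_compl.2 fun x hx => ?_) hμs
    exact abs_le.1 (hspec x hx)
  · rintro a rfl
    simp at hμ1 hμ2
    rw [hμ1] at hμ2; norm_num at hμ2
  have hVc : ContinuousAt V 0 := hVa.continuousAt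
  have hWa : AnalyticAt ℝ (fun m => V (m / c)) 0 := by
    refine AnalyticAt.fun_comp (g := V) (f := fun m => m / c) ?_ ?_
    · simpa using hVa
    · exact analyticAt_id.div_const
  have hWc : ContinuousAt (fun m => V (m / c)) 0 := hWa.continuousAt
  refine ⟨hWa, by simpa using hV0, ?_⟩
  have e1 : ∀ᶠ M in nhds (0:ℝ), |M / c| < ε := by
    refine ContinuousAt.eventually_lt (by fun_prop) (by fun_prop) (by simpa using hε)
  have e2 : ∀ᶠ M in nhds (0:ℝ), |M / c| * (|M / c| + R) < V (M / c) := by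
    refine ContinuousAt.eventually_lt (by fun_prop) hWc (by simpa using hV0)
  have e3 : ∀ᶠ M in nhds (0:ℝ), |M| * (|M| + R') < V (M / c) := by
    refine ContinuousAt.eventually_lt (by fun_prop) hWc (by simpa using hV0)
  have e4 : ∀ᶠ M in nhds (0:ℝ), |t| * (|M / c| * (|M / c| + R)) + |M / c| * (|M / c| + R) < V (M / c) := by
    refine ContinuousAt.eventually_lt (by fun_prop) hWc (by simpa using hV0)
  have e5 : ∀ᶠ M in nhds (0:ℝ), 0 < V (M / c) := by
    refine ContinuousAt.eventually_lt (by fun_prop) hWc (by simpa using hV0)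
  obtain ⟨η, hη, hall⟩ := Metric.eventually_nhds_iff.1 (e1.and (e2.and (e3.and (e4.and e5))))
  refine ⟨η, hη, fun M hM => ?_⟩
  obtain ⟨b1, b2, b3, b4, b5⟩ := hall (y := M) (by simpa using hM)
  by_cases hM0 : M = 0
  · subst hM0
    simp [cskKernel, hV0.ne', hV0.le, hμ1]
  obtain ⟨-, k1, k2⟩ := hker (M / c) b1
  simp only [cskKernel] at k1 k2 ⊢
  set m : ℝ := M / c with hm
  have hMm : M = c * m := by rw [hm]; field_simp
  have hm0 : m ≠ 0 := by rw [hm]; exact div_ne_zero hM0 hc0.ne'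
  set v : ℝ := V m
  have hlow : ∀ (a r x : ℝ), |x| ≤ r → v - |a| * (|a| + r) ≤ v + a * (a - x) := by
    intro a r x hx
    have h1 : |a * (a - x)| ≤ |a| * (|a| + r) := by
      rw [abs_mul]
      gcongr
      exact (abs_sub _ _).trans (by linarith)
    linarith [neg_abs_le (a * (a - x))]
  have hD' : ∀ x ∈ spectrum ℝ Y, 0 < v + M * (M - x) := by
    intro x hx
    linarith [hlow M R' x (hspec x hx)]
  have hR0 : 0 ≤ R := by
    obtain ⟨x, hx⟩ := hRae.exists
    exact (abs_nonneg x).trans hx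
  set d : ℝ := v - |m| * (|m| + R) with hd
  have hdpos : 0 < d := by linarith
  have hD : ∀ᵐ x ∂ν, d ≤ v + m * (m - x) := by
    filter_upwards [hRae] with x hx
    exact hlow m R x hx
  have hfm : Measurable (fun x : ℝ => v / (v + m * (m - x))) := by fun_prop
  have hfb : ∀ᵐ x ∂ν, ‖v / (v + m * (m - x))‖ ≤ v / d := by
    filter_upwards [hD] with x hx
    rw [Real.norm_eq_abs, abs_of_pos (div_pos b5 (by linarith))]
    gcongr
  have hfi : Integrable (fun x : ℝ => v / (v + m * (m - x))) ν :=
    Integrable.of_bound hfm.aestronglyMeasurable _ hfb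
  have hxi : Integrable (fun x : ℝ => x) ν :=
    Integrable.of_bound measurable_id.aestronglyMeasurable R (by simpa using hRae)
  have hxfi : Integrable (fun x : ℝ => x * (v / (v + m * (m - x)))) ν :=
    hxi.mul_bdd hfm.aestronglyMeasurable hfb
  obtain ⟨ψ, hψ1, hψ2⟩ := hX3 (fun x => v / (v + m * (m - x)) - 1) (m + v / m) m
    (|m| * (|m| + R) / d) (by fun_prop) (by positivity) (by
      filter_upwards [hD, hRae] with x hx hxR
      have hpos : 0 < v + m * (m - x) := by linarith
      have : v / (v + m * (m - x)) - 1 = (m * (x - m)) / (v + m * (m - x)) := by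
        field_simp; ring
      rw [this, abs_div, abs_of_pos hpos, abs_mul]
      gcongr
      exact (abs_sub _ _).trans (by linarith)) (by
      rw [integral_sub hfi (integrable_const _), k1]; simp) (by
      filter_upwards [hD] with x hx
      have hpos : v + m * (m - x) ≠ 0 := by linarith
      field_simp
      ring) (by
      have : ∀ x : ℝ, x * (v / (v + m * (m - x)) - 1) = x * (v / (v + m * (m - x))) - x := by
        intro x; ring
      simp only [this]
      rw [integral_sub hxfi hxi, k2, hmean, sub_zero]) (by
      rw [← mul_div_assoc, div_lt_one hdpos]; linarith)
  have hYψ : Y ψ = ((M + v / M : ℝ) : ℂ) • (ψ - Ω) + (M : ℂ) • Ω := by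
    have hmc : (m:ℂ) ≠ 0 := by exact_mod_cast hm0
    have ht2c : (t:ℂ) ^ 2 = (c:ℂ) ^ 2 - 1 := by exact_mod_cast ht2
    rw [hYX, hψ2, ht2c, hMm]
    match_scalars <;> · push_cast; field_simp; ring
  obtain ⟨s1, s2⟩ := kernel_step Y hY Ω ψ v M b5 hM0 (fun x hx => (hD' x hx).ne') hYψ
  have hcont : ContinuousOn (fun x : ℝ => v / (v + M * (M - x))) (spectrum ℝ Y) :=
    ContinuousOn.div (by fun_prop) (by fun_prop) (fun x hx => (hD' x hx).ne')
  refine ⟨?_, ?_, ?_⟩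
  · filter_upwards [hμae] with x hx
    exact (div_pos b5 (hD' x hx)).le
  · rw [hμf _ hcont, s1, hψ1]; simp
  · rw [hμf (fun x => x * (v / (v + M * (M - x)))) (continuousOn_id.mul hcont), s2]
    have hΩΩ : inner ℂ Ω Ω = (1:ℂ) := by simp [inner_self_eq_norm_sq_to_K, hΩ]
    simp only [hYψ, inner_add_right, inner_smul_right, inner_sub_right, hψ1, hΩΩ]
    simp

/-- If `V ∈ 𝒱` and `c ≥ 1` then `m ↦ V(m/c) ∈ 𝒱`. -/
theorem memV_scale (V : ℝ → ℝ) (c : ℝ) (hc : 1 ≤ c) (hV : memV V) :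
    memV (fun m => V (m / c)) := by
  obtain ⟨ν, ⟨hν, ⟨R, hR⟩, -, hmean⟩, hvar, hVa, hV0, ε, hε, hker⟩ := hV
  have hRae : ∀ᵐ x ∂ν, |x| ≤ R := by
    have : ∀ᵐ x ∂ν, x ∈ Set.Icc (-R) R := hR
    filter_upwards [this] with x hx
    exact abs_le.2 hx
  have ht2 : √(c ^ 2 - 1) ^ 2 = c ^ 2 - 1 := Real.sq_sqrt (by nlinarith)
  obtain ⟨H, i1, i2, i3, Ω, X, hΩ, hX, hX1, hX2, hX3⟩ :=
    free_power_model ν R hRae hmean (√(c ^ 2 - 1)) c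
  exact memV_core V c hc ν R hRae hmean hvar hVa hV0 ε hε hker _ ht2 Ω X hΩ hX hX1 hX2 hX3
end
end
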